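/- arXiv:1004.0521 — 3 statements merged into one kernel-verified Lean document; each statement's English description precedes it below -/
import Mathlib

section
/- The derivation D = ∂_x + b·y·∂_y of k[x,y], for any b ∈ k, is surjective. -/
open MvPolynomial

/-!
Write `D` for the derivation. On monomials, `D (x ^ n * y ^ m) = n x ^ (n - 1) y ^ m + b m x ^ n y ^ m`,
and `D` is `k`-linear, so it is enough to reach every `x ^ n * y ^ m`. If `b m = 0`, integrate in `x`:
`x ^ (n + 1) y ^ m / (n + 1)` is a preimage, by characteristic zero. If `b m ≠ 0`, then
`x ^ n y ^ m` is `(b m)⁻¹ D (x ^ n y ^ m)` up to a multiple of `x ^ (n - 1) y ^ m`, and induction on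
`n` applies.
-/

theorem deriv_apply_mul_pow {k : Type*} [Field k] (b : k) (n m : ℕ) :
    (MvPolynomial.mkDerivation k ![1, b • X 1] :
        Derivation k (MvPolynomial (Fin 2) k) (MvPolynomial (Fin 2) k)) (X 0 ^ n * X 1 ^ m) =
      (n : k) • (X 0 ^ (n - 1) * X 1 ^ m) + (b * m) • (X 0 ^ n * X 1 ^ m) := by
  rw [Derivation.leibniz, Derivation.leibniz_pow, Derivation.leibniz_pow, mkDerivation_X,
    mkDerivation_X]
  -- `m - 1` is truncated, so `m = 0` has to be separated.
  cases m <;> simp [smul_eq_C_mul] <;> ring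

theorem exists_deriv_eq_mul_pow {k : Type*} [Field k] [CharZero k] (b : k) (n m : ℕ) :
    ∃ p, (MvPolynomial.mkDerivation k ![1, b • X 1] :
        Derivation k (MvPolynomial (Fin 2) k) (MvPolynomial (Fin 2) k)) p = X 0 ^ n * X 1 ^ m := by
  by_cases hc : b * m = 0
  · refine ⟨((n + 1 : ℕ) : k)⁻¹ • (X 0 ^ (n + 1) * X 1 ^ m), ?_⟩
    rw [Derivation.map_smul, deriv_apply_mul_pow, hc, zero_smul, add_zero, Nat.add_sub_cancel,
      inv_smul_smul₀ (Nat.cast_ne_zero.2 n.succ_ne_zero)]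
  · induction n with
    | zero =>
      refine ⟨(b * m)⁻¹ • (X 0 ^ 0 * X 1 ^ m), ?_⟩
      rw [Derivation.map_smul, deriv_apply_mul_pow, Nat.cast_zero, zero_smul, zero_add,
        inv_smul_smul₀ hc]
    | succ n ih =>
      obtain ⟨p, hp⟩ := ih
      refine ⟨(b * m)⁻¹ • (X 0 ^ (n + 1) * X 1 ^ m - ((n + 1 : ℕ) : k) • p), ?_⟩
      rw [Derivation.map_smul, Derivation.map_sub, Derivation.map_smul, hp, deriv_apply_mul_pow,
        Nat.add_sub_cancel, add_sub_cancel_left, inv_smul_smul₀ hc]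

/-- The derivation `D = ∂_x + b·y·∂_y` of `k[x,y]` is surjective. -/
theorem deriv_surjective (k : Type*) [Field k] [CharZero k] (b : k) :
    Function.Surjective
      ⇑(MvPolynomial.mkDerivation k ![1, b • X 1] :
        Derivation k (MvPolynomial (Fin 2) k) (MvPolynomial (Fin 2) k)) := by
  intro f
  induction f using MvPolynomial.induction_on' with
  | monomial u a =>
    obtain ⟨p, hp⟩ := exists_deriv_eq_mul_pow b (u 0) (u 1)
    refine ⟨a • p, ?_⟩
    rw [Derivation.map_smul, hp, monomial_eq, Finsupp.prod_fintype _ _ (fun _ => pow_zero _),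
      Fin.prod_univ_two, smul_eq_C_mul]
  | add f g hf hg =>
    obtain ⟨p, hp⟩ := hf
    obtain ⟨q, hq⟩ := hg
    exact ⟨p + q, by rw [Derivation.map_add, hp, hq]⟩
end

section
/- Let k be a field of characteristic zero and D a locally finite k-derivation of k[x,y]. Then Im D is a Mathieu subspace of k[x,y]. -/
/-!
Let `K` be the algebraic closure of `k`. A `k`-linear retraction `K → k`, applied to coefficients,
commutes with `D` and its extension `D_K`, so `Im D = Im D_K ∩ k[x,y]` (`map_mem_range_iff`), and it
is enough to treat `D_K`. The classification of locally finite derivations is not used.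

Over `K`, local finiteness makes `K[x,y]` the direct sum of the generalized eigenspaces `wt D c`
(`exists_weightProj`). These multiply like a grading by the additive group of `K`, and `D` is
bijective on each of nonzero weight. Hence membership in `Im D` is decided by the component of
weight zero (`IsWeightProj.mem_range_iff`), and the cases are as follows.

* Only constants have weight zero: `Im D` is an ideal (`range_isIdeal_of_wt_zero_const`).
* `D` is nonzero on weight zero, but only constants there are killed by `D`: there is `s` with
  `D s = 1`, and `D` is surjective (`range_eq_top_of_slice`).
* Everything has weight zero, that is, `D` is locally nilpotent, and some nonconstant `p` is killed
  by `D`: the kernel is `K[p]` for `p` of minimal degree. If `D s = h(p)` with `h` of minimal degree,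
  then `K[x,y] = K[p, s]`, and `D (F(p, s)) = (∂F/∂s)(p, s) · D s`, so the image is the ideal
  generated by `D s` (`range_isIdeal_of_nilpotent`).
* There are a nonconstant `p` with `D p = 0` and a nonzero `u` of weight `l ≠ 0`
  (`isMathieu_of_kernel_of_weight`). Vectors whose weights are independent modulo those of a subring
  are transcendental over it, and `K[x,y]` has transcendence degree two. Therefore every weight is a
  rational multiple of `l`, and `D` vanishes on weight zero. So `Im D` consists of the polynomials
  with no component of weight zero, and each `f` is the value at `T = 1` of a Laurent polynomial `F`
  whose `n`-th coefficient has weight `n * t`, with `t ≠ 0`. If all `f ^ m` lie in `Im D`, then all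
  `F ^ m` have zero constant term. By the one-variable Duistermaat–van der Kallen theorem the
  exponents of `F` are all positive or all negative, so the component of `g * f ^ m` of weight zero
  vanishes for large `m`.

The Duistermaat–van der Kallen theorem (`dvdk_domain`) is proved algebraically. When all powers of
`f` have zero constant term, `log (1 - z f)` splits into parts with positive and with negative
exponents of `t`. Exponentiating gives a factorization `1 - z f = W J` with exponents of `W` in
`[0, b]` and those of `J` in `[-a, 0]` (`exists_factorization`). If `f` has exponents of both signs,
then `t ^ a J` is a monic factor of `t ^ a (f - z⁻¹) / f_b`, a monic polynomial over `L[z⁻¹]`, so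
its coefficients are integral over `L[z⁻¹]`. But its constant coefficient is `- f_{-a} z`, and `z`
is not integral over `L[z⁻¹]` (`no_factorization`).
-/

open MvPolynomial

def IsMathieu (k : Type*) {R : Type*} [Field k] [CommRing R] [Algebra k R]
    (M : Submodule k R) : Prop :=
  ∀ a : R, (∀ m : ℕ, 1 ≤ m → a ^ m ∈ M) →
    ∀ b : R, ∃ N : ℕ, ∀ m : ℕ, N ≤ m → b * a ^ m ∈ M

/-- A derivation `D` is locally finite if for every `a` the span of `{D^i a : i ≥ 1}`
is finite-dimensional. -/
def IsLocallyFinite {k R : Type*} [Field k] [CommRing R] [Algebra k R]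
    (D : Derivation k R R) : Prop :=
  ∀ a : R,
    FiniteDimensional k
      (Submodule.span k (Set.range fun i : ℕ => (D.toLinearMap ^ (i + 1)) a))

/-! ### Power series solutions of `z dφ/dz = g φ` -/

section Eul
variable {L R : Type*} [Field L] [CharZero L] [CommRing R] [Algebra L R]

/-- The Euler derivation `z d/dz` on `R⟦z⟧`. -/
noncomputable def eul (R : Type*) [CommRing R] : Derivation R (PowerSeries R) (PowerSeries R) :=
  (PowerSeries.X : PowerSeries R) • PowerSeries.derivative R

theorem coeff_eul (φ : PowerSeries R) (n : ℕ) :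
    PowerSeries.coeff n (eul R φ) = n * PowerSeries.coeff n φ := by
  cases n with
  | zero => simp [eul]
  | succ n =>
    simp [eul, PowerSeries.coeff_succ_X_mul, PowerSeries.coeff_derivative, mul_comm]

variable (L) in
/-- A solution of `z dφ/dz = g φ` has its nonconstant coefficients in any multiplicatively closed
subspace containing the coefficients of `g`. -/
theorem eul_coeff_mem {g φ : PowerSeries R} (hg : PowerSeries.coeff 0 g = 0)
    (h : eul R φ = g * φ) (h1 : PowerSeries.coeff 0 φ = 1) (M : Submodule L R)
    (hM : ∀ x ∈ M, ∀ y ∈ M, x * y ∈ M) (hgM : ∀ n, PowerSeries.coeff n g ∈ M) :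
    ∀ n, n ≠ 0 → PowerSeries.coeff n φ ∈ M := by
  intro n
  induction n using Nat.strong_induction_on with
  | _ n ih =>
    intro hn
    have e := congrArg (PowerSeries.coeff n) h
    rw [coeff_eul, PowerSeries.coeff_mul] at e
    have hmem : (n : L) • PowerSeries.coeff n φ ∈ M := by
      rw [Algebra.smul_def, map_natCast, e]
      refine M.sum_mem fun p hp => ?_
      rw [Finset.HasAntidiagonal.mem_antidiagonal] at hp
      rcases Nat.eq_zero_or_pos p.1 with h0 | h0
      · rw [h0, hg, zero_mul]; exact M.zero_mem
      · rcases Nat.eq_zero_or_pos p.2 with h0' | h0'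
        · rw [h0', h1, mul_one]; exact hgM _
        · exact hM _ (hgM _) _ (ih p.2 (by omega) (by omega))
    have := M.smul_mem ((n : L)⁻¹) hmem
    rwa [smul_smul, inv_mul_cancel₀ (Nat.cast_ne_zero.mpr hn), one_smul] at this

/-- Coefficients of the power series solution of `z dφ/dz = g φ`, `φ(0) = 1`. -/
noncomputable def eulSol (L : Type*) {R : Type*} [Field L] [CommRing R] [Algebra L R]
    (g : ℕ → R) : ℕ → R
  | 0 => 1
  | n + 1 => ((n + 1 : ℕ) : L)⁻¹ • ∑ i : Fin (n + 1), g (n + 1 - i) * eulSol L g i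

theorem exists_eul_solution (L : Type*) {R : Type*} [Field L] [CharZero L] [CommRing R]
    [Algebra L R] {g : PowerSeries R} (hg : PowerSeries.coeff 0 g = 0) :
    ∃ φ : PowerSeries R, PowerSeries.coeff 0 φ = 1 ∧ eul R φ = g * φ := by
  refine ⟨PowerSeries.mk (eulSol L fun n => PowerSeries.coeff n g), by simp [eulSol], ?_⟩
  ext n
  rw [coeff_eul, PowerSeries.coeff_mul]
  cases n with
  | zero => simp [hg]
  | succ n =>
    rw [PowerSeries.coeff_mk, eulSol, ← Finset.Nat.sum_antidiagonal_swap,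
      Finset.Nat.sum_antidiagonal_eq_sum_range_succ_mk,
      ← map_natCast (algebraMap L R), ← Algebra.smul_def, smul_smul,
      mul_inv_cancel₀ (Nat.cast_ne_zero.mpr n.succ_ne_zero), one_smul,
      Finset.sum_range_succ, Finset.sum_range]
    simp [hg]

theorem eq_one_of_eul_eq_zero (L : Type*) {R : Type*} [Field L] [CharZero L] [CommRing R]
    [Algebra L R] {φ : PowerSeries R} (h : eul R φ = 0)
    (h1 : PowerSeries.coeff 0 φ = 1) : φ = 1 := by
  ext n
  rcases Nat.eq_zero_or_pos n with rfl | hn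
  · simp [h1]
  · have e := congrArg (PowerSeries.coeff n) h
    rw [coeff_eul, ← map_natCast (algebraMap L R), ← Algebra.smul_def] at e
    have := congrArg (fun x => (n : L)⁻¹ • x) e
    rw [smul_smul, inv_mul_cancel₀ (Nat.cast_ne_zero.mpr hn.ne'), one_smul, map_zero,
      smul_zero] at this
    rw [this, PowerSeries.coeff_one, if_neg hn.ne']

end Eul

/-- The inverse of the variable is not integral over a polynomial ring: a monic relation for it
would become, after reversal, a polynomial identity with nonzero value at `0`. -/
theorem not_isIntegral_inv {L Ω : Type*} [Field L] [Field Ω] (B : Polynomial L →+* Ω)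
    (hB : Function.Injective B) : ¬ B.IsIntegralElem (B Polynomial.X)⁻¹ := by
  rintro ⟨p, hp, hp0⟩
  have hX : B Polynomial.X ≠ 0 := fun h => Polynomial.X_ne_zero (hB (h.trans (map_zero B).symm))
  let _ : Invertible (B Polynomial.X)⁻¹ := invertibleOfNonzero (inv_ne_zero hX)
  rw [← Polynomial.eval₂_reverse_eq_zero_iff, invOf_eq_inv, inv_inv, Polynomial.eval₂_hom] at hp0
  have h0 : p.reverse.eval Polynomial.X = 0 := hB (by rw [hp0, map_zero])
  have := congrArg (Polynomial.eval 0) h0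
  rw [Polynomial.eval_zero, ← Polynomial.coe_evalRingHom, ← Polynomial.eval₂_hom] at this
  simp only [Polynomial.coe_evalRingHom, Polynomial.eval_X] at this
  rw [Polynomial.eval₂_at_zero, Polynomial.coeff_zero_reverse, hp.leadingCoeff] at this
  simp at this

/-! ### Wiener–Hopf factorization over Laurent polynomials -/

section Laurent
variable {L : Type*} [Field L]

/-- Laurent polynomials whose exponents lie in `S`. -/
def suppIn (L : Type*) [Field L] (S : Set ℤ) : Submodule L (LaurentPolynomial L) where
  carrier := {x | ∀ n, n ∉ S → x.coeff n = 0}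
  add_mem' := by
    intro x y hx hy n hn
    simp [hx n hn, hy n hn]
  zero_mem' := by intro n _; simp
  smul_mem' := by
    intro c x hx n hn
    simp [hx n hn]

theorem mem_suppIn {S : Set ℤ} {x : LaurentPolynomial L} :
    x ∈ suppIn L S ↔ ∀ n, n ∉ S → x.coeff n = 0 := Iff.rfl

theorem suppIn_mul {S T U : Set ℤ} (h : ∀ s ∈ S, ∀ t ∈ T, s + t ∈ U)
    {x y : LaurentPolynomial L} (hx : x ∈ suppIn L S) (hy : y ∈ suppIn L T) :
    x * y ∈ suppIn L U := by
  classical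
  intro n hn
  rw [AddMonoidAlgebra.coeff_mul_apply_left]
  refine Finset.sum_eq_zero fun i _ => ?_
  by_cases hi : i ∈ S
  · dsimp only
    rw [hy _ fun hT => hn ?_, mul_zero]
    have := h i hi _ hT
    rwa [← add_assoc, add_neg_cancel, zero_add] at this
  · dsimp only
    rw [hx i hi, zero_mul]

theorem suppIn_mono {S T : Set ℤ} (h : S ⊆ T) {x : LaurentPolynomial L} (hx : x ∈ suppIn L S) :
    x ∈ suppIn L T := fun n hn => hx n fun hS => hn (h hS)

theorem one_mem_suppIn {S : Set ℤ} (h : (0 : ℤ) ∈ S) : (1 : LaurentPolynomial L) ∈ suppIn L S := by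
  intro n hn
  rw [← LaurentPolynomial.T_zero, LaurentPolynomial.T_apply, if_neg]
  rintro rfl
  exact hn h

/-- Part of a Laurent polynomial with exponents in `S`. -/
noncomputable def part (S : Set ℤ) (x : LaurentPolynomial L) : LaurentPolynomial L :=
  open Classical in AddMonoidAlgebra.ofCoeff (x.coeff.filter (· ∈ S))

theorem part_mem (S : Set ℤ) (x : LaurentPolynomial L) : part S x ∈ suppIn L S := by
  intro n hn
  simp [part, hn]

theorem part_add_part {x : LaurentPolynomial L} (hx : x.coeff 0 = 0) :
    part (Set.Ioi 0) x + part (Set.Iio 0) x = x := by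
  ext n
  rcases lt_trichotomy n 0 with h | rfl | h
  · simp [part, h, not_lt.2 h.le]
  · simp [part, hx]
  · simp [part, h, not_lt.2 h.le]

theorem coeff_mul_of_suppIn {b : ℕ} {x y : LaurentPolynomial L} (hx : x ∈ suppIn L (Set.Icc 0 b))
    (l : ℤ) : (x * y).coeff l = ∑ i ∈ Finset.range (b + 1), x.coeff i * y.coeff (l - i) := by
  rw [AddMonoidAlgebra.coeff_mul_apply_left, Finsupp.sum]
  rw [← Finset.sum_image (s := Finset.range (b + 1)) (g := fun i : ℕ => (i : ℤ))
    (f := fun i : ℤ => x.coeff i * y.coeff (l - i)) (by intro i _ j _ h; exact Int.ofNat_inj.mp h)]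
  simp only [show ∀ i : ℤ, -i + l = l - i from fun i => by ring]
  apply Finset.sum_subset
  · intro i hi
    rw [Finsupp.mem_support_iff] at hi
    have : i ∈ Set.Icc (0 : ℤ) b := by
      by_contra hc
      exact hi (hx i hc)
    rw [Finset.mem_image]
    exact ⟨i.toNat, by have h2 := this.2; have h1 := this.1; rw [Finset.mem_range]; omega,
      by simpa using this.1⟩
  · intro i _ hi
    rw [Finsupp.notMem_support_iff.mp hi, zero_mul]

/-- The coefficient of `t^i` in a power series in `z` over Laurent polynomials in `t`. -/
noncomputable def slice (F : PowerSeries (LaurentPolynomial L)) (i : ℤ) : PowerSeries L :=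
  PowerSeries.mk fun n => (PowerSeries.coeff n F).coeff i

theorem slice_mul {b : ℕ} {F G : PowerSeries (LaurentPolynomial L)}
    (hF : ∀ n, PowerSeries.coeff n F ∈ suppIn L (Set.Icc 0 b)) (l : ℤ) :
    slice (F * G) l = ∑ i ∈ Finset.range (b + 1), slice F i * slice G (l - i) := by
  ext n
  simp only [slice, PowerSeries.coeff_mk, PowerSeries.coeff_mul, map_sum]
  rw [AddMonoidAlgebra.coeff_sum, Finsupp.finsetSum_apply, Finset.sum_comm]
  exact Finset.sum_congr rfl fun p _ => coeff_mul_of_suppIn (hF _) l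

/-- Wiener–Hopf (Birkhoff) factorization of `1 - z f` when all powers of `f` have vanishing
constant term: the factors are the exponentials of the parts of `log (1 - z f)` with positive and
with negative exponents. -/
theorem exists_factorization [CharZero L] {f : LaurentPolynomial L} {a b : ℕ}
    (hs : f ∈ suppIn L (Set.Icc (-a) b)) (h : ∀ m : ℕ, 1 ≤ m → (f ^ m).coeff 0 = 0) :
    ∃ W J : PowerSeries (LaurentPolynomial L),
      W * J = 1 - PowerSeries.C f * PowerSeries.X ∧
      PowerSeries.coeff 0 W = 1 ∧ PowerSeries.coeff 0 J = 1 ∧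
      (∀ n, n ≠ 0 → PowerSeries.coeff n W ∈ suppIn L (Set.Ioc 0 b)) ∧
      (∀ n, n ≠ 0 → PowerSeries.coeff n J ∈ suppIn L (Set.Ico (-a) 0)) := by
  set u : PowerSeries (LaurentPolynomial L) := 1 - PowerSeries.C f * PowerSeries.X with hu
  -- `gp + gm` is the logarithmic derivative `z u' / u = - ∑ n ≥ 1, f ^ n z ^ n`
  let gp : PowerSeries (LaurentPolynomial L) :=
    PowerSeries.mk fun n => if n = 0 then 0 else -part (Set.Ioi 0) (f ^ n)
  let gm : PowerSeries (LaurentPolynomial L) :=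
    PowerSeries.mk fun n => if n = 0 then 0 else -part (Set.Iio 0) (f ^ n)
  have hG : eul _ u = (gp + gm) * u := by
    have hg : ∀ n, PowerSeries.coeff n (gp + gm) = if n = 0 then 0 else - f ^ n := by
      intro n
      rcases Nat.eq_zero_or_pos n with rfl | hn
      · simp [gp, gm]
      · simp only [gp, gm, map_add, PowerSeries.coeff_mk, if_neg hn.ne']
        rw [← neg_add, part_add_part (h n hn)]
    ext1 n
    rw [coeff_eul, hu, mul_sub, mul_one, map_sub, map_sub, ← mul_assoc,
      mul_comm _ (PowerSeries.C f), mul_assoc, PowerSeries.coeff_C_mul, PowerSeries.coeff_C_mul, hg]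
    rcases n with _ | _ | n
    · simp
    · simp [PowerSeries.coeff_one, hg, PowerSeries.coeff_succ_mul_X]
    · rw [PowerSeries.coeff_succ_mul_X, hg]
      simp [PowerSeries.coeff_one, PowerSeries.coeff_X, pow_succ']
  have hgp0 : PowerSeries.coeff 0 gp = 0 := by simp [gp]
  have hgm0 : PowerSeries.coeff 0 gm = 0 := by simp [gm]
  have hngp0 : PowerSeries.coeff 0 (-gp) = 0 := by rw [map_neg, hgp0, neg_zero]
  have hngm0 : PowerSeries.coeff 0 (-gm) = 0 := by rw [map_neg, hgm0, neg_zero]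
  have hgp : ∀ n, PowerSeries.coeff n gp ∈ suppIn L (Set.Ioi 0) := by
    intro n
    simp only [gp, PowerSeries.coeff_mk]
    split_ifs
    · exact Submodule.zero_mem _
    · exact Submodule.neg_mem _ (part_mem _ _)
  have hgm : ∀ n, PowerSeries.coeff n gm ∈ suppIn L (Set.Iio 0) := by
    intro n
    simp only [gm, PowerSeries.coeff_mk]
    split_ifs
    · exact Submodule.zero_mem _
    · exact Submodule.neg_mem _ (part_mem _ _)
  have hngp : ∀ n, PowerSeries.coeff n (-gp) ∈ suppIn L (Set.Ioi 0) := by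
    intro n; rw [map_neg]; exact Submodule.neg_mem _ (hgp n)
  have hngm : ∀ n, PowerSeries.coeff n (-gm) ∈ suppIn L (Set.Iio 0) := by
    intro n; rw [map_neg]; exact Submodule.neg_mem _ (hgm n)
  have hPos : ∀ x ∈ suppIn L (Set.Ioi 0), ∀ y ∈ suppIn L (Set.Ioi 0),
      x * y ∈ suppIn L (Set.Ioi 0) := fun x hx y hy => suppIn_mul (by simp; omega) hx hy
  have hNeg : ∀ x ∈ suppIn L (Set.Iio 0), ∀ y ∈ suppIn L (Set.Iio 0),
      x * y ∈ suppIn L (Set.Iio 0) := fun x hx y hy => suppIn_mul (by simp; omega) hx hy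
  -- `I` and `V` are the inverses of the two factors, so the factors are `u * I` and `u * V`;
  -- this presentation is what bounds their exponents by `b` and `-a`
  obtain ⟨I, hI0, hI⟩ := exists_eul_solution L (g := -gm) hngm0
  obtain ⟨V, hV0, hV⟩ := exists_eul_solution L (g := -gp) hngp0
  have hu0 : PowerSeries.coeff 0 u = 1 := by simp [hu]
  have c0 : ∀ F G : PowerSeries (LaurentPolynomial L), PowerSeries.coeff 0 (F * G) =
    PowerSeries.coeff 0 F * PowerSeries.coeff 0 G := fun F G => by simp
  have hW : eul _ (u * I) = gp * (u * I) := by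
    rw [Derivation.leibniz, hI, hG, smul_eq_mul, smul_eq_mul]; ring
  have hJ : eul _ (u * V) = gm * (u * V) := by
    rw [Derivation.leibniz, hV, hG, smul_eq_mul, smul_eq_mul]; ring
  have h1 : u * I * V = 1 := by
    apply eq_one_of_eul_eq_zero L
    · rw [Derivation.leibniz, hV, hW, smul_eq_mul, smul_eq_mul]; ring
    · rw [c0, c0, hu0, hI0, hV0]; simp
  have hIm := eul_coeff_mem L hngm0 hI hI0 _ hNeg hngm
  have hVm := eul_coeff_mem L hngp0 hV hV0 _ hPos hngp
  have hWm := eul_coeff_mem L hgp0 hW (by rw [c0, hu0, hI0, one_mul]) _ hPos hgp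
  have hJm := eul_coeff_mem L hgm0 hJ (by rw [c0, hu0, hV0, one_mul]) _ hNeg hgm
  have hcoef : ∀ (F : PowerSeries (LaurentPolynomial L)) (n : ℕ), PowerSeries.coeff (n + 1) (u * F)
      = PowerSeries.coeff (n + 1) F - f * PowerSeries.coeff n F := by
    intro F n
    rw [hu, sub_mul, one_mul, map_sub, mul_assoc, PowerSeries.coeff_C_mul,
      PowerSeries.coeff_succ_X_mul]
  refine ⟨u * I, u * V, ?_, by rw [c0, hu0, hI0, one_mul], by rw [c0, hu0, hV0, one_mul], ?_, ?_⟩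
  · calc u * I * (u * V) = u * (u * I * V) := by ring
      _ = u := by rw [h1, mul_one]
  · intro n hn
    have h2 : PowerSeries.coeff n (u * I) ∈ suppIn L (Set.Iic b) := by
      obtain ⟨n, rfl⟩ := Nat.exists_eq_succ_of_ne_zero hn
      rw [Nat.succ_eq_add_one, hcoef]
      refine Submodule.sub_mem _ (suppIn_mono ?_ (hIm _ hn)) ?_
      · intro i; simp; omega
      · refine suppIn_mul (T := Set.Iic 0) ?_ hs ?_
        · simp; omega
        · rcases Nat.eq_zero_or_pos n with rfl | hn'
          · rw [hI0]; exact one_mem_suppIn (by simp)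
          · exact suppIn_mono (fun i => by simp; omega) (hIm n hn'.ne')
    intro i hi
    by_cases hi' : 0 < i
    · exact h2 i (fun h => hi ⟨hi', h⟩)
    · exact hWm n hn i hi'
  · intro n hn
    have h2 : PowerSeries.coeff n (u * V) ∈ suppIn L (Set.Ici (-a)) := by
      obtain ⟨n, rfl⟩ := Nat.exists_eq_succ_of_ne_zero hn
      rw [Nat.succ_eq_add_one, hcoef]
      refine Submodule.sub_mem _ (suppIn_mono ?_ (hVm _ hn)) ?_
      · intro i; simp; omega
      · refine suppIn_mul (T := Set.Ici 0) ?_ hs ?_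
        · simp; omega
        · rcases Nat.eq_zero_or_pos n with rfl | hn'
          · rw [hV0]; exact one_mem_suppIn (by simp)
          · exact suppIn_mono (fun i => by simp; omega) (hVm n hn'.ne')
    intro i hi
    by_cases hi' : i < 0
    · exact h2 i (fun h => hi ⟨h, hi'⟩)
    · exact hJm n hn i hi'

end Laurent

/-! ### The Duistermaat–van der Kallen theorem in one variable -/

section DvdK
variable {L : Type*} [Field L]

/-- A Laurent polynomial with exponents of both signs has no such factorization: the coefficients
of the monic factor `t ^ a J` are integral over `L[z⁻¹]`, while its constant coefficient is a
nonzero multiple of `z`. -/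
theorem no_factorization {Ω : Type*} [Field Ω]
    (ι : PowerSeries L →+* Ω) (hι : Function.Injective ι) {f : LaurentPolynomial L} {a b : ℕ}
    (ha : a ≠ 0) (hb : b ≠ 0) (hfa : f.coeff (-a) ≠ 0) (hfb : f.coeff b ≠ 0)
    (hs : f ∈ suppIn L (Set.Icc (-a) b))
    {W J : PowerSeries (LaurentPolynomial L)}
    (hWJ : W * J = 1 - PowerSeries.C f * PowerSeries.X)
    (hW0 : PowerSeries.coeff 0 W = 1) (hJ0 : PowerSeries.coeff 0 J = 1)
    (hW : ∀ n, n ≠ 0 → PowerSeries.coeff n W ∈ suppIn L (Set.Ioc 0 b))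
    (hJ : ∀ n, n ≠ 0 → PowerSeries.coeff n J ∈ suppIn L (Set.Ico (-a) 0)) : False := by
  have hone : ∀ i : ℤ, (1 : LaurentPolynomial L).coeff i = if i = 0 then 1 else 0 := by
    intro i
    rw [← LaurentPolynomial.T_zero, LaurentPolynomial.T_apply]
    simp only [eq_comm]
  have hW' : ∀ n, PowerSeries.coeff n W ∈ suppIn L (Set.Icc 0 b) := by
    intro n
    rcases eq_or_ne n 0 with rfl | hn
    · rw [hW0]; exact one_mem_suppIn (by simp)
    · exact suppIn_mono Set.Ioc_subset_Icc_self (hW n hn)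
  have hJ' : ∀ n, PowerSeries.coeff n J ∈ suppIn L (Set.Icc (-a) 0) := by
    intro n
    rcases eq_or_ne n 0 with rfl | hn
    · rw [hJ0]; exact one_mem_suppIn (by simp)
    · exact suppIn_mono Set.Ico_subset_Icc_self (hJ n hn)
  have sW : ∀ i : ℤ, (b : ℤ) < i → slice W i = 0 := by
    intro i hi; ext n
    simpa [slice] using hW' n i (by simp; omega)
  have sJ : ∀ i : ℤ, (0 < i ∨ i < -a) → slice J i = 0 := by
    intro i hi; ext n
    simpa [slice] using hJ' n i (by simp; omega)
  have sJ0 : slice J 0 = 1 := by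
    ext n
    simp only [slice, PowerSeries.coeff_mk, PowerSeries.coeff_one]
    split_ifs with h
    · rw [h, hJ0, hone, if_pos rfl]
    · exact hJ n h 0 (by simp)
  have sW0 : slice W 0 = 1 := by
    ext n
    simp only [slice, PowerSeries.coeff_mk, PowerSeries.coeff_one]
    split_ifs with h
    · rw [h, hW0, hone, if_pos rfl]
    · exact hW n h 0 (by simp)
  have sP : ∀ i : ℤ, slice (W * J) i =
      (if i = 0 then 1 else 0) - PowerSeries.C (f.coeff i) * PowerSeries.X := by
    intro i
    rw [hWJ]
    ext n
    simp only [slice, PowerSeries.coeff_mk, map_sub, PowerSeries.coeff_C_mul]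
    rcases n with _ | _ | n
    · simp only [PowerSeries.coeff_zero_X, PowerSeries.coeff_zero_one, mul_zero, sub_zero, hone]
      split_ifs <;> simp
    · split_ifs <;> simp [PowerSeries.coeff_one]
    · split_ifs <;> simp [PowerSeries.coeff_one, PowerSeries.coeff_X]
  -- the factors as polynomials in `t` over `Ω`
  let Jp : Polynomial Ω := ∑ i ∈ Finset.range (a + 1), Polynomial.monomial i (ι (slice J (i - a)))
  let Wp : Polynomial Ω := ∑ i ∈ Finset.range (b + 1), Polynomial.monomial i (ι (slice W i))
  have cJ : ∀ i, Jp.coeff i = ι (slice J (i - a)) := by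
    intro i
    simp only [Jp, Polynomial.finsetSum_coeff, Polynomial.coeff_monomial]
    rw [Finset.sum_ite_eq' ]
    split_ifs with h
    · rfl
    · rw [sJ _ (by rw [Finset.mem_range] at h; omega), map_zero]
  have cW : ∀ i, Wp.coeff i = ι (slice W i) := by
    intro i
    simp only [Wp, Polynomial.finsetSum_coeff, Polynomial.coeff_monomial]
    rw [Finset.sum_ite_eq' ]
    split_ifs with h
    · rfl
    · rw [sW _ (by rw [Finset.mem_range] at h; omega), map_zero]
  have cP : ∀ l : ℕ, (Wp * Jp).coeff l = ι (slice (W * J) (l - a)) := by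
    intro l
    rw [Polynomial.coeff_mul, Finset.Nat.sum_antidiagonal_eq_sum_range_succ_mk, slice_mul hW',
      map_sum]
    have e : ∀ i ∈ Finset.range (l + 1), Wp.coeff i * Jp.coeff (l - i) =
        ι (slice W i * slice J (l - a - i)) := by
      intro i hi
      rw [Finset.mem_range] at hi
      rw [cW, cJ, map_mul, Nat.cast_sub (by omega)]
      congr 3; ring
    rw [Finset.sum_congr rfl e]
    rcases le_total l b with hlb | hlb
    · apply Finset.sum_subset
      · intro i; simp only [Finset.mem_range]; omega
      · intro i _ hi
        rw [sJ _ (by rw [Finset.mem_range] at hi; omega), mul_zero, map_zero]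
    · symm
      apply Finset.sum_subset
      · intro i; simp only [Finset.mem_range]; omega
      · intro i _ hi
        rw [sW _ (by rw [Finset.mem_range] at hi; omega), zero_mul, map_zero]
  set z : Ω := ι PowerSeries.X with hz
  have hz0 : z ≠ 0 := fun h => PowerSeries.X_ne_zero (hι (h.trans (map_zero ι).symm))
  -- `B` realizes `L[z⁻¹]` inside `Ω`
  let κ : L →+* Ω := ι.comp PowerSeries.C
  let B : Polynomial L →+* Ω := Polynomial.eval₂RingHom κ z⁻¹
  have hBX : B Polynomial.X = z⁻¹ := by simp [B]
  have hBC : ∀ c, B (Polynomial.C c) = κ c := by simp [B]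
  have hB : Function.Injective B := by
    rw [injective_iff_map_eq_zero]
    intro p hp
    let _ : Invertible z⁻¹ := invertibleOfNonzero (inv_ne_zero hz0)
    have h1 : Polynomial.eval₂ κ z⁻¹ p = 0 := hp
    rw [← Polynomial.eval₂_reverse_eq_zero_iff, invOf_eq_inv, inv_inv] at h1
    have h2 : ι (p.reverse : PowerSeries L) = Polynomial.eval₂ κ z p.reverse := by
      rw [hz, Polynomial.hom_eval₂ _ _ _ _ |>.symm]
      congr 1
      exact Polynomial.eval₂_C_X_eq_coe.symm
    rw [← h2] at h1
    have h3 : (p.reverse : PowerSeries L) = 0 := hι (h1.trans (map_zero ι).symm)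
    have h4 : p.reverse = 0 := by exact_mod_cast h3
    simpa using h4
  -- the monic polynomial `t ^ a (f - z⁻¹) / f_b`, with `z⁻¹` as the inner variable
  let M : Polynomial (Polynomial L) :=
    ∑ i ∈ Finset.range (a + b + 1), Polynomial.monomial i
      (Polynomial.C (f.coeff (i - a) / f.coeff b)
        - if i = a then Polynomial.C (f.coeff b)⁻¹ * Polynomial.X else 0)
  have cM : ∀ i, M.coeff i = Polynomial.C (f.coeff (i - a) / f.coeff b)
        - if i = a then Polynomial.C (f.coeff b)⁻¹ * Polynomial.X else 0 := by
    intro i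
    simp only [M, Polynomial.finsetSum_coeff, Polynomial.coeff_monomial]
    rw [Finset.sum_ite_eq' ]
    split_ifs with h h' h'
    · rfl
    · rfl
    · rw [Finset.mem_range] at h; omega
    · rw [hs, zero_div, map_zero, sub_zero]
      rw [Finset.mem_range] at h
      simp; omega
  have hMmonic : M.Monic := by
    apply Polynomial.monic_of_natDegree_le_of_coeff_eq_one (a + b)
    · rw [Polynomial.natDegree_le_iff_coeff_eq_zero]
      intro i hi
      rw [cM, if_neg (by omega), hs, zero_div, map_zero, sub_zero]
      simp; omega
    · rw [cM, if_neg (by omega)]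
      rw [show ((a + b : ℕ) : ℤ) - a = b by push_cast; ring, div_self hfb]
      simp
  have hJmonic : Jp.Monic := by
    apply Polynomial.monic_of_natDegree_le_of_coeff_eq_one a
    · rw [Polynomial.natDegree_le_iff_coeff_eq_zero]
      intro i hi
      rw [cJ, sJ _ (by omega), map_zero]
    · rw [cJ, sub_self, sJ0, map_one]
  have hκb : κ (f.coeff b) ≠ 0 := by
    rw [Ne, map_eq_zero]; exact hfb
  have hdvd : Jp ∣ M.map B := by
    refine ⟨Polynomial.C (-(z⁻¹ * (κ (f.coeff b))⁻¹)) * Wp, ?_⟩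
    rw [mul_comm, mul_assoc]
    ext l
    rw [Polynomial.coeff_C_mul, cP, sP, Polynomial.coeff_map, cM, map_sub B, map_sub ι, map_mul ι,
      ← hz, hBC, map_div₀ κ]
    have : ι (PowerSeries.C (f.coeff (l - a))) = κ (f.coeff (l - a)) := rfl
    rw [this]
    by_cases h : l = a
    · rw [if_pos h, if_pos (by omega), map_one ι, map_mul B, hBC, hBX, map_inv₀ κ]
      field_simp
      ring
    · rw [if_neg h, if_neg (by omega), map_zero ι, map_zero B]
      field_simp
      ring
  let _ : Algebra (Polynomial L) Ω := B.toAlgebra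
  have hint := Polynomial.isIntegral_coeff_of_dvd M Jp hMmonic hJmonic hdvd 0
  have hc0 : Jp.coeff 0 = - (κ (f.coeff (-a)) * z) := by
    have h1 := cP 0
    rw [Polynomial.mul_coeff_zero, cW, Nat.cast_zero, sW0, map_one, one_mul, zero_sub, sP,
      if_neg (by omega), zero_sub, map_neg, map_mul] at h1
    exact h1
  have hκa : κ (f.coeff (-a)) ≠ 0 := by
    rw [Ne, map_eq_zero]; exact hfa
  have hz' : IsIntegral (Polynomial L) z := by
    have h1 : IsIntegral (Polynomial L) (algebraMap (Polynomial L) Ω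
      (Polynomial.C (-(f.coeff (-a))⁻¹))) := isIntegral_algebraMap
    have h2 := h1.mul hint
    have h3 : algebraMap (Polynomial L) Ω (Polynomial.C (-(f.coeff (-a))⁻¹)) * Jp.coeff 0 = z := by
      rw [hc0]
      change B _ * _ = _
      rw [hBC, map_neg, map_inv₀]
      field_simp
    rwa [h3] at h2
  apply not_isIntegral_inv B hB
  rw [hBX, inv_inv]
  exact hz'

variable [CharZero L]

/-- The one-variable Duistermaat–van der Kallen theorem. -/
theorem dvdk_field (f : LaurentPolynomial L) (h : ∀ m : ℕ, 1 ≤ m → (f ^ m).coeff 0 = 0) :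
    (∀ n, f.coeff n ≠ 0 → 0 < n) ∨ (∀ n, f.coeff n ≠ 0 → n < 0) := by
  by_contra hcon
  push Not at hcon
  obtain ⟨⟨i, hi, hi0⟩, j, hj, hj0⟩ := hcon
  have hf0 : f.coeff 0 = 0 := by simpa using h 1 le_rfl
  have hi1 : i ∈ f.coeff.support := Finsupp.mem_support_iff.mpr hi
  have hj1 : j ∈ f.coeff.support := Finsupp.mem_support_iff.mpr hj
  have hne : f.coeff.support.Nonempty := ⟨i, hi1⟩
  have hmin := f.coeff.support.min'_mem hne
  have hmax := f.coeff.support.max'_mem hne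
  have hle1 := f.coeff.support.min'_le i hi1
  have hle2 := f.coeff.support.le_max' j hj1
  have hm : ∀ n, f.coeff n ≠ 0 → f.coeff.support.min' hne ≤ n ∧ n ≤ f.coeff.support.max' hne :=
    fun n hn => ⟨f.coeff.support.min'_le n (Finsupp.mem_support_iff.mpr hn),
      f.coeff.support.le_max' n (Finsupp.mem_support_iff.mpr hn)⟩
  rw [Finsupp.mem_support_iff] at hmin hmax
  have hn1 : f.coeff.support.min' hne ≠ 0 := fun h0 => hmin (by rw [h0, hf0])
  have hn2 : f.coeff.support.max' hne ≠ 0 := fun h0 => hmax (by rw [h0, hf0])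
  obtain ⟨a, ha⟩ : ∃ a : ℕ, f.coeff.support.min' hne = -a :=
    ⟨(-f.coeff.support.min' hne).toNat, by omega⟩
  obtain ⟨b, hb⟩ : ∃ b : ℕ, f.coeff.support.max' hne = b :=
    ⟨(f.coeff.support.max' hne).toNat, by omega⟩
  rw [ha] at hmin hm hn1
  rw [hb] at hmax hm hn2
  have hs : f ∈ suppIn L (Set.Icc (-a) b) := by
    intro n hn
    by_contra h0
    exact hn (hm n h0)
  obtain ⟨W, J, hWJ, hW0, hJ0, hW, hJ⟩ := exists_factorization hs h
  exact no_factorization (algebraMap (PowerSeries L) (FractionRing (PowerSeries L)))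
    (IsFractionRing.injective _ _) (by omega) (by omega) hmin hmax hs hWJ hW0 hJ0 hW hJ

theorem dvdk_domain {R : Type*} [CommRing R] [IsDomain R] [CharZero R] (f : LaurentPolynomial R)
    (h : ∀ m : ℕ, 1 ≤ m → (f ^ m).coeff 0 = 0) :
    (∀ n, f.coeff n ≠ 0 → 0 < n) ∨ (∀ n, f.coeff n ≠ 0 → n < 0) := by
  let ι := algebraMap R (FractionRing R)
  have hι : Function.Injective ι := IsFractionRing.injective _ _
  have hch : CharZero (FractionRing R) := charZero_of_injective_algebraMap hι
  let Φ := AddMonoidAlgebra.mapRingHom ℤ ι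
  have hΦ : ∀ (g : LaurentPolynomial R) (n : ℤ), (Φ g).coeff n = ι (g.coeff n) := by
    intro g n
    simp [Φ]
  have h0 : ∀ (g : LaurentPolynomial R) (n : ℤ), (Φ g).coeff n ≠ 0 ↔ g.coeff n ≠ 0 := by
    intro g n
    rw [hΦ, Ne, map_eq_zero_iff _ hι]
  have := dvdk_field (Φ f) (fun m hm => by rw [← map_pow, hΦ, h m hm, map_zero])
  simpa only [h0] using this

end DvdK

/-! ### Generalized eigenspaces and the weight decomposition -/

section LinearAlgebra
variable {K V : Type*} [Field K] [AddCommGroup V] [Module K V]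

/-- `T - c` is surjective on the generalized eigenspace of any `μ ≠ c`. -/
theorem exists_sub_smul_eq {T : Module.End K V} {c μ : K} (hne : μ ≠ c) {u : V}
    (hu : u ∈ T.maxGenEigenspace μ) : ∃ v ∈ T.maxGenEigenspace μ, T v - c • v = u := by
  simp only [Module.End.mem_maxGenEigenspace] at hu ⊢
  obtain ⟨n, hn⟩ := hu
  suffices h : ∃ v, ((T - μ • 1) ^ n) v = 0 ∧ T v - c • v = u by
    obtain ⟨v, h1, h2⟩ := h
    exact ⟨v, ⟨n, h1⟩, h2⟩
  induction n generalizing u with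
  | zero => exact ⟨0, by simp, by simpa using hn.symm⟩
  | succ n ih =>
    have hw : ((T - μ • 1) ^ n) (T u - μ • u) = 0 := by
      rw [pow_succ] at hn
      simpa using hn
    obtain ⟨w, hw1, hw2⟩ := ih hw
    have hc : μ - c ≠ 0 := sub_ne_zero.mpr hne
    refine ⟨(μ - c)⁻¹ • (u - w), ?_, ?_⟩
    · rw [map_smul, map_sub, hn, pow_succ', Module.End.mul_apply, hw1, map_zero, sub_zero, smul_zero]
    · rw [map_smul, smul_comm c, ← smul_sub, map_sub]
      have : T u - T w - c • (u - w) = (μ - c) • u := by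
        have : T w = T u - μ • u + c • w := by rw [← hw2]; abel
        rw [this]; module
      rw [this, smul_smul, inv_mul_cancel₀ hc, one_smul]

/-- A vector annihilated by a nonzero polynomial in `T` is a sum of generalized eigenvectors. The
ambient space may be infinite-dimensional. -/
theorem mem_iSup_maxGenEigenspace [IsAlgClosed K] (T : Module.End K V) {p : Polynomial K}
    (hp : p ≠ 0) {v : V} (hv : Polynomial.aeval T p v = 0) :
    v ∈ ⨆ μ, T.maxGenEigenspace μ := by
  induction hd : p.natDegree generalizing p v with
  | zero =>
    rw [Polynomial.eq_C_of_natDegree_eq_zero hd] at hv hp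
    rw [Polynomial.aeval_C, Module.algebraMap_end_apply] at hv
    have h0 : p.coeff 0 ≠ 0 := fun h => hp (by rw [h, map_zero])
    rw [(smul_eq_zero.mp hv).resolve_left h0]
    exact Submodule.zero_mem _
  | succ n ih =>
    obtain ⟨c, hc⟩ := IsAlgClosed.exists_root p (by
      rw [Polynomial.degree_eq_natDegree hp, hd]; exact_mod_cast n.succ_ne_zero)
    obtain ⟨q, rfl⟩ := Polynomial.dvd_iff_isRoot.mpr hc
    have hq : q ≠ 0 := right_ne_zero_of_mul hp
    rw [Polynomial.natDegree_mul (Polynomial.X_sub_C_ne_zero c) hq, Polynomial.natDegree_X_sub_C]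
      at hd
    have h1 : T v - c • v ∈ ⨆ μ, T.maxGenEigenspace μ := by
      refine ih hq ?_ (by omega)
      rw [mul_comm, map_mul, Module.End.mul_apply] at hv
      simpa using hv
    -- solve `(T - c) w ≡ (T - c) v` modulo the generalized eigenspace of `c`
    have key : ∀ x ∈ ⨆ μ, T.maxGenEigenspace μ, ∃ w ∈ ⨆ μ, T.maxGenEigenspace μ,
        x - (T w - c • w) ∈ T.maxGenEigenspace c := by
      intro x hx
      induction hx using Submodule.iSup_induction' with
      | mem μ x hx =>
        by_cases h : μ = c
        · subst h
          exact ⟨0, Submodule.zero_mem _, by simpa using hx⟩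
        · obtain ⟨w, hw, rfl⟩ := exists_sub_smul_eq h hx
          exact ⟨w, Submodule.mem_iSup_of_mem μ hw, by simp⟩
      | zero => exact ⟨0, Submodule.zero_mem _, by simp⟩
      | add x y _ _ hx hy =>
        obtain ⟨w, hw, hw'⟩ := hx
        obtain ⟨z, hz, hz'⟩ := hy
        refine ⟨w + z, Submodule.add_mem _ hw hz, ?_⟩
        convert Submodule.add_mem _ hw' hz' using 1
        rw [map_add, smul_add]; abel
    obtain ⟨w, hw, hw'⟩ := key _ h1
    have h2 : v - w ∈ T.maxGenEigenspace c := by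
      rw [Module.End.mem_maxGenEigenspace] at hw' ⊢
      obtain ⟨m, hm⟩ := hw'
      refine ⟨m + 1, ?_⟩
      rw [pow_succ, Module.End.mul_apply, ← hm]
      congr 1
      simp only [LinearMap.sub_apply, LinearMap.smul_apply, Module.End.one_apply, map_sub]
    have := Submodule.add_mem _ (Submodule.mem_iSup_of_mem c h2) hw
    simpa using this

end LinearAlgebra

section Weights
variable {K R : Type*} [Field K] [CommRing R] [Algebra K R]

/-- The space of elements of weight `c`, i.e. the generalized eigenspace of `D` for `c`. -/
abbrev wt (D : Derivation K R R) (c : K) : Submodule K R :=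
  Module.End.maxGenEigenspace (D.toLinearMap : Module.End K R) c

theorem mem_wt {D : Derivation K R R} {c : K} {a : R} :
    a ∈ wt D c ↔ ∃ n : ℕ, ((D.toLinearMap - c • 1) ^ n) a = 0 :=
  Module.End.mem_maxGenEigenspace _ _ _

theorem mem_wt_of_eigen {D : Derivation K R R} {c : K} {a : R} (h : D a = c • a) :
    a ∈ wt D c := by
  rw [mem_wt]
  exact ⟨1, by simp [h]⟩

theorem D_mem_wt {D : Derivation K R R} {c : K} {a : R} (h : a ∈ wt D c) : D a ∈ wt D c := by
  rw [mem_wt] at *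
  obtain ⟨n, hn⟩ := h
  refine ⟨n, ?_⟩
  have : Commute ((D.toLinearMap - c • 1) ^ n) D.toLinearMap := by
    apply Commute.pow_left
    apply Commute.sub_left (Commute.refl _)
    exact (Commute.one_left _).smul_left c
  have h2 := congrArg (fun f : Module.End K R => f a) this.eq
  simp only [Module.End.mul_apply, hn, map_zero] at h2
  exact h2

theorem mul_mem_wt {D : Derivation K R R} {c d : K} {a b : R} (ha : a ∈ wt D c)
    (hb : b ∈ wt D d) : a * b ∈ wt D (c + d) := by
  rw [mem_wt] at *
  obtain ⟨m, hm⟩ := ha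
  obtain ⟨n, hn⟩ := hb
  refine ⟨m + n, ?_⟩
  induction hs : m + n generalizing m n a b with
  | zero =>
    obtain rfl : m = 0 := by omega
    have : a = 0 := by simpa using hm
    simp [this]
  | succ s ih =>
    rcases m with _ | m
    · have : a = 0 := by simpa using hm
      simp [this]
    rcases n with _ | n
    · have : b = 0 := by simpa using hn
      simp [this]
    -- `D - (c + d)` obeys a Leibniz rule in terms of `D - c` and `D - d`
    have e : (D.toLinearMap - (c + d) • 1) (a * b) = (D.toLinearMap - c • 1) a * b
        + a * (D.toLinearMap - d • 1) b := by
      change D (a * b) - (c + d) • (a * b) = (D a - c • a) * b + a * (D b - d • b)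
      simp only [Derivation.leibniz, smul_eq_mul, Algebra.smul_def, map_add]
      ring
    rw [pow_succ, Module.End.mul_apply, e, map_add]
    rw [ih m (by rw [pow_succ] at hm; exact hm) (n + 1) hn (by omega),
      ih (m + 1) hm n (by rw [pow_succ] at hn; exact hn) (by omega), add_zero]

theorem one_mem_wt (D : Derivation K R R) : (1 : R) ∈ wt D 0 := mem_wt_of_eigen (by simp)

theorem pow_mem_wt {D : Derivation K R R} {c : K} {a : R} (ha : a ∈ wt D c) (n : ℕ) :
    a ^ n ∈ wt D (n * c) := by
  induction n with
  | zero => simpa using one_mem_wt D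
  | succ n ih =>
    rw [pow_succ, Nat.cast_succ, add_mul, one_mul]
    exact mul_mem_wt ih ha

/-- A family of projections onto the weight spaces of `D`, witnessing that the ring is their
direct sum. -/
structure IsWeightProj (D : Derivation K R R) (π : K → R →ₗ[K] R) : Prop where
  mem : ∀ c a, π c a ∈ wt D c
  same : ∀ c a, a ∈ wt D c → π c a = a
  ne : ∀ c d a, a ∈ wt D c → c ≠ d → π d a = 0
  sum : ∀ a, ∃ s : Finset K, (∀ c ∉ s, π c a = 0) ∧ a = ∑ c ∈ s, π c a

theorem exists_weightProj [IsAlgClosed K] (D : Derivation K R R)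
    (h : ∀ a, ∃ p : Polynomial K, p ≠ 0 ∧ Polynomial.aeval D.toLinearMap p a = 0) :
    ∃ π, IsWeightProj D π := by
  classical
  have hint : DirectSum.IsInternal (wt D) := by
    apply DirectSum.isInternal_submodule_of_iSupIndep_of_iSup_eq_top
    · exact Module.End.independent_maxGenEigenspace D.toLinearMap
    · rw [eq_top_iff]
      intro a _
      obtain ⟨p, hp, hpa⟩ := h a
      exact mem_iSup_maxGenEigenspace _ hp hpa
  let _ : DirectSum.Decomposition (wt D) := hint.chooseDecomposition
  refine ⟨fun c => (wt D c).subtype ∘ₗ DirectSum.component K K (fun c => wt D c) c ∘ₗ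
    (DirectSum.decomposeLinearEquiv (wt D)).toLinearMap, ?_, ?_, ?_, ?_⟩
  · intro c a
    exact Subtype.property _
  · intro c a ha
    exact DirectSum.decompose_of_mem_same _ ha
  · intro c d a ha hne
    exact DirectSum.decompose_of_mem_ne _ ha hne
  · intro a
    refine ⟨(DirectSum.decompose (wt D) a).support, ?_, ?_⟩
    · intro c hc
      rw [DFinsupp.notMem_support_iff] at hc
      exact congrArg Subtype.val hc
    · exact (DirectSum.sum_support_decompose (wt D) a).symm

namespace IsWeightProj
variable {D : Derivation K R R} {π : K → R →ₗ[K] R}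

theorem induction {P : R → Prop} (hπ : IsWeightProj D π) (a : R) (h0 : P 0)
    (hadd : ∀ a b, P a → P b → P (a + b))
    (hw : ∀ c, ∀ a ∈ wt D c, P a) : P a := by
  obtain ⟨s, -, hs⟩ := hπ.sum a
  rw [hs]
  exact Finset.sum_induction _ P hadd h0 fun c _ => hw c _ (hπ.mem c a)

theorem comm_D (hπ : IsWeightProj D π) (c : K) (a : R) : π c (D a) = D (π c a) := by
  refine hπ.induction (P := fun a => π c (D a) = D (π c a)) a (by simp)
    (fun a b ha hb => by simp only [map_add, ha, hb]) fun d a ha => ?_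
  by_cases h : d = c
  · subst h
    rw [hπ.same _ _ ha, hπ.same _ _ (D_mem_wt ha)]
  · rw [hπ.ne _ _ _ ha h, hπ.ne _ _ _ (D_mem_wt ha) h, map_zero]

theorem proj_mul (hπ : IsWeightProj D π) {c : K} {a : R} (ha : a ∈ wt D c) (d : K) (b : R) :
    π d (a * b) = a * π (d - c) b := by
  refine hπ.induction (P := fun b => π d (a * b) = a * π (d - c) b) b (by simp)
    (fun x y hx hy => by simp only [mul_add, map_add, hx, hy]) fun e b hb => ?_
  by_cases h : e = d - c
  · subst h
    rw [hπ.same _ _ hb]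
    exact hπ.same _ _ (by simpa using mul_mem_wt ha hb)
  · rw [hπ.ne _ _ _ hb h, mul_zero]
    exact hπ.ne _ _ _ (mul_mem_wt ha hb) (fun h' => h (by rw [← h']; ring))

theorem eq_zero (hπ : IsWeightProj D π) {c d : K} (h : c ≠ d) {a : R} (hc : a ∈ wt D c)
    (hd : a ∈ wt D d) : a = 0 := by
  rw [← hπ.same _ _ hd, hπ.ne _ _ _ hc h]

theorem mem_range_of_ne {c : K} (hc : c ≠ 0) {a : R} (ha : a ∈ wt D c) :
    a ∈ LinearMap.range D.toLinearMap := by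
  obtain ⟨v, -, hv⟩ := exists_sub_smul_eq hc ha
  exact ⟨v, by simpa using hv⟩

/-- Membership in the image of `D` is decided in weight zero, since `D` is bijective on the
other weight spaces. -/
theorem mem_range_iff (hπ : IsWeightProj D π) (a : R) :
    a ∈ LinearMap.range D.toLinearMap ↔ ∃ b ∈ wt D 0, D b = π 0 a := by
  constructor
  · rintro ⟨b, rfl⟩
    exact ⟨π 0 b, hπ.mem 0 b, (hπ.comm_D 0 b).symm⟩
  · rintro ⟨b, -, hb⟩
    have h1 : a - π 0 a ∈ LinearMap.range D.toLinearMap := by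
      refine hπ.induction (P := fun a => a - π 0 a ∈ LinearMap.range D.toLinearMap) a (by simp)
        (fun x y hx hy => ?_) fun c x hx => ?_
      · convert Submodule.add_mem _ hx hy using 1
        rw [map_add]; abel
      · by_cases h : c = 0
        · subst h
          rw [hπ.same _ _ hx, sub_self]; exact Submodule.zero_mem _
        · rw [hπ.ne _ _ _ hx h, sub_zero]
          exact mem_range_of_ne h hx
    have h2 : π 0 a ∈ LinearMap.range D.toLinearMap := ⟨b, hb⟩
    simpa using Submodule.add_mem _ h1 h2

end IsWeightProj
end Weights

/-! ### Algebraic dependence, constants and transcendence degree -/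

section Algebraicity
variable {K R : Type*} [Field K] [CommRing R] [Algebra K R]

/-- Over an algebraically closed field, a nonzero polynomial relation modulo a prime ideal
identifies an element with a constant. -/
theorem exists_sub_mem_of_aeval_mem [IsAlgClosed K] (I : Ideal R) [hI : I.IsPrime]
    {p : Polynomial K} (hp : p ≠ 0) {q : R} (h : Polynomial.aeval q p ∈ I) :
    ∃ c : K, q - algebraMap K R c ∈ I := by
  induction hd : p.natDegree generalizing p with
  | zero =>
    exfalso
    rw [Polynomial.eq_C_of_natDegree_eq_zero hd] at h hp
    have h0 : p.coeff 0 ≠ 0 := fun h => hp (by rw [h, map_zero])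
    rw [Polynomial.aeval_C] at h
    exact hI.ne_top (Ideal.eq_top_of_isUnit_mem _ h ((isUnit_iff_ne_zero.mpr h0).map _))
  | succ n ih =>
    obtain ⟨c, hc⟩ := IsAlgClosed.exists_root p (by
      rw [Polynomial.degree_eq_natDegree hp, hd]; exact_mod_cast n.succ_ne_zero)
    obtain ⟨r, rfl⟩ := Polynomial.dvd_iff_isRoot.mpr hc
    have hr : r ≠ 0 := right_ne_zero_of_mul hp
    rw [Polynomial.natDegree_mul (Polynomial.X_sub_C_ne_zero c) hr, Polynomial.natDegree_X_sub_C]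
      at hd
    rw [map_mul] at h
    rcases hI.mem_or_mem h with h | h
    · exact ⟨c, by simpa using h⟩
    · exact ih hr h (by omega)

theorem eq_const_of_isAlgebraic [IsDomain R] [IsAlgClosed K] {q : R} (h : IsAlgebraic K q) :
    ∃ c : K, q = algebraMap K R c := by
  obtain ⟨p, hp, hq⟩ := h
  obtain ⟨c, hc⟩ := exists_sub_mem_of_aeval_mem (⊥ : Ideal R) hp (q := q) (by simp [hq])
  exact ⟨c, by rwa [Ideal.mem_bot, sub_eq_zero] at hc⟩

/-- Elements algebraic over a subring of constants are constants. -/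
theorem D_eq_zero_of_isAlgebraic [IsDomain R] [CharZero K] (D : Derivation K R R)
    {S : Subalgebra K R}
    (hS : ∀ a ∈ S, D a = 0) {a : R} (ha : IsAlgebraic S a) : D a = 0 := by
  by_contra hDa
  obtain ⟨F, hF0, hF⟩ := ha
  have hder : ∀ G : Polynomial S,
      D (Polynomial.aeval a G) = Polynomial.aeval a G.derivative * D a := by
    intro G
    induction G using Polynomial.induction_on' with
    | add p q hp hq => simp only [map_add, hp, hq, add_mul]
    | monomial n r =>
      have : D (algebraMap S R r) = 0 := hS _ r.2
      simp only [Polynomial.aeval_monomial, Polynomial.derivative_monomial, Derivation.leibniz,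
        Derivation.leibniz_pow, smul_eq_mul, this, map_mul, map_natCast, nsmul_eq_mul]
      ring
  have : CharZero S := charZero_of_injective_algebraMap (algebraMap K S).injective
  induction hn : F.natDegree using Nat.strong_induction_on generalizing F with
  | _ n ih =>
    rcases Nat.eq_zero_or_pos n with rfl | hpos
    · rw [Polynomial.eq_C_of_natDegree_eq_zero hn] at hF hF0
      rw [Polynomial.aeval_C] at hF
      apply hF0
      have : F.coeff 0 = 0 := Subtype.ext hF
      rw [this, map_zero]
    · have h0 : F.derivative ≠ 0 := by
        intro h
        rw [Polynomial.derivative_eq_zero] at h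
        omega
      have h1 := hder F
      rw [hF, map_zero] at h1
      have h2 : Polynomial.aeval a F.derivative = 0 :=
        (mul_eq_zero.mp h1.symm).resolve_right hDa
      have h3 := Polynomial.natDegree_derivative_lt (p := F) (by omega)
      exact ih _ (by omega) _ h0 h2 rfl

end Algebraicity

section TwoVariables
variable {K : Type*} [Field K]

/-- `K[x,y]` has no chain of three successively transcendental elements, by transcendence degree.
-/
theorem not_three_indep {p q a : MvPolynomial (Fin 2) K}
    (hp : Transcendental K p)
    {S T : Subalgebra K (MvPolynomial (Fin 2) K)} (hpS : p ∈ S) (hq : Transcendental S q)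
    (hpT : p ∈ T) (hqT : q ∈ T) (ha : Transcendental T a) : False := by
  have h1 : AlgebraicIndependent K (fun _ : Unit => p) :=
    (algebraicIndependent_unique_type_iff).mpr hp
  have h2 := (h1.option_iff_transcendental q).mpr
    (hq.of_tower_top_of_subalgebra_le (Algebra.adjoin_le (by rintro _ ⟨_, rfl⟩; exact hpS)))
  have h3 := (h2.option_iff_transcendental a).mpr
    (ha.of_tower_top_of_subalgebra_le (Algebra.adjoin_le (by rintro _ ⟨_ | _, rfl⟩ <;> assumption)))
  have h4 := h3.lift_cardinalMk_le_trdeg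
  rw [MvPolynomial.trdeg_of_isDomain] at h4
  simp at h4
  norm_num at h4

end TwoVariables

/-! ### Homogeneous Laurent polynomials -/

section Homogeneous
variable {K R : Type*} [Field K] [CommRing R] [Algebra K R]
  {D : Derivation K R R} {π : K → R →ₗ[K] R}

theorem IsWeightProj.eq_zero_of_proj (hπ : IsWeightProj D π) {a : R} (h : ∀ c, π c a = 0) :
    a = 0 := by
  obtain ⟨s, -, hs⟩ := hπ.sum a
  rw [hs]
  exact Finset.sum_eq_zero fun c _ => h c

/-- The subalgebra of elements all of whose weights lie in the subgroup `H`. -/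
def wtAlg (hπ : IsWeightProj D π) (H : AddSubgroup K) : Subalgebra K R where
  carrier := {a | ∀ c ∉ H, π c a = 0}
  mul_mem' := by
    intro a b ha hb c hc
    obtain ⟨s, -, hs⟩ := hπ.sum a
    rw [hs, Finset.sum_mul, map_sum]
    refine Finset.sum_eq_zero fun d _ => ?_
    rw [hπ.proj_mul (hπ.mem d a)]
    by_cases hd : d ∈ H
    · rw [hb _ fun h => hc (by simpa using H.add_mem h hd), mul_zero]
    · rw [ha d hd, zero_mul]
  add_mem' := by
    intro a b ha hb c hc
    rw [map_add, ha c hc, hb c hc, add_zero]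
  algebraMap_mem' := by
    intro r c hc
    rw [Algebra.algebraMap_eq_smul_one, map_smul,
      hπ.ne 0 c 1 (one_mem_wt D) (fun h => hc (h ▸ H.zero_mem)), smul_zero]

theorem mem_wtAlg_of_mem_wt (hπ : IsWeightProj D π) {H : AddSubgroup K} {c : K} (hc : c ∈ H)
    {a : R} (ha : a ∈ wt D c) : a ∈ wtAlg hπ H :=
  fun d hd => hπ.ne c d a ha fun h => hd (h ▸ hc)

/-- A nonzero element whose weight has infinite order modulo `H` is transcendental over the
elements with weights in `H`: distinct powers contribute to disjoint sets of weights. -/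
theorem transcendental_of_weight [IsDomain R] (hπ : IsWeightProj D π) {H : AddSubgroup K} {w : K}
    {u : R}
    (hu : u ∈ wt D w) (hu0 : u ≠ 0) (hw : ∀ n : ℕ, n ≠ 0 → (n : K) * w ∉ H) :
    Transcendental (wtAlg hπ H) u := by
  rw [transcendental_iff]
  intro F hF
  ext i
  refine hπ.eq_zero_of_proj fun c => ?_
  by_cases hc : c ∈ H
  · have h1 : π (c + i * w) (Polynomial.aeval u F) = u ^ i * π c (F.coeff i) := by
      rw [Polynomial.aeval_eq_sum_range, map_sum, Finset.sum_eq_single i]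
      · rw [Algebra.smul_def, mul_comm (algebraMap _ R _), hπ.proj_mul (pow_mem_wt hu i),
          add_sub_cancel_right]
        rfl
      · intro j _ hji
        rw [Algebra.smul_def, mul_comm (algebraMap _ R _), hπ.proj_mul (pow_mem_wt hu j)]
        have : π (c + i * w - j * w) (F.coeff j) = 0 := by
          apply (F.coeff j).2
          intro h
          rcases lt_or_gt_of_ne hji with hlt | hlt
          · apply hw (i - j) (by omega)
            rw [Nat.cast_sub hlt.le]
            convert H.sub_mem h hc using 1
            ring
          · apply hw (j - i) (by omega)
            rw [Nat.cast_sub hlt.le]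
            convert H.sub_mem hc h using 1
            ring
        exact mul_eq_zero_of_right _ this
      · intro hi
        rw [Polynomial.coeff_eq_zero_of_natDegree_lt (by simpa using hi), zero_smul, map_zero]
    rw [hF, map_zero] at h1
    exact (mul_eq_zero.mp h1.symm).resolve_left (pow_ne_zero _ hu0)
  · exact (F.coeff i).2 c hc

theorem exists_common_multiple [CharZero K] {t : K} (s : Finset K)
    (h : ∀ c ∈ s, ∃ n : ℕ, n ≠ 0 ∧ ∃ m : ℤ, (n : K) * c = m * t) :
    ∃ n : ℕ, n ≠ 0 ∧ ∀ c ∈ s, ∃ m : ℤ, (n : K) * c = m * t := by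
  classical
  induction s using Finset.induction_on with
  | empty => exact ⟨1, one_ne_zero, by simp⟩
  | insert c s _ ih =>
    obtain ⟨n, hn, hs⟩ := ih fun c hc => h c (Finset.mem_insert_of_mem hc)
    obtain ⟨n', hn', m', hm'⟩ := h c (Finset.mem_insert_self c s)
    refine ⟨n * n', mul_ne_zero hn hn', fun d hd => ?_⟩
    rw [Finset.mem_insert] at hd
    rcases hd with rfl | hd
    · exact ⟨n * m', by push_cast; rw [mul_assoc, hm', mul_assoc]⟩
    · obtain ⟨m, hm⟩ := hs d hd
      exact ⟨n' * m, by push_cast; rw [mul_comm (n : K), mul_assoc, hm, mul_assoc]⟩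

/-- Evaluation of Laurent polynomials at `T = 1`. -/
noncomputable def evalOne (R : Type*) [CommRing R] : LaurentPolynomial R →ₐ[R] R :=
  AddMonoidAlgebra.lift R R ℤ 1

theorem evalOne_apply (F : LaurentPolynomial R) :
    evalOne R F = ∑ n ∈ F.coeff.support, F.coeff n := by
  simp [evalOne, AddMonoidAlgebra.lift_apply, Finsupp.sum]

/-- Laurent polynomials over `R` whose `n`-th coefficient has weight `n * t`. -/
def IsHom (D : Derivation K R R) (t : K) (F : LaurentPolynomial R) : Prop :=
  ∀ n : ℤ, F.coeff n ∈ wt D (n * t)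

theorem IsHom.pow {t : K} {F : LaurentPolynomial R} (hF : IsHom D t F) (m : ℕ) :
    IsHom D t (F ^ m) := by
  induction m with
  | zero =>
    intro n
    rw [pow_zero, ← LaurentPolynomial.T_zero, LaurentPolynomial.T_apply]
    split_ifs with h
    · rw [← h]; simpa using one_mem_wt D
    · exact Submodule.zero_mem _
  | succ m ih =>
    intro n
    rw [pow_succ, AddMonoidAlgebra.coeff_mul_apply_left]
    refine Submodule.sum_mem _ fun i _ => ?_
    convert mul_mem_wt (ih i) (hF (-i + n)) using 1
    push_cast; ring_nf

theorem IsHom.proj_evalOne [CharZero K] (hπ : IsWeightProj D π) {t : K} (ht : t ≠ 0)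
    {F : LaurentPolynomial R} (hF : IsHom D t F) (n : ℤ) :
    π (n * t) (evalOne R F) = F.coeff n := by
  rw [evalOne_apply, map_sum, Finset.sum_eq_single n]
  · exact hπ.same _ _ (hF n)
  · intro m _ hmn
    refine hπ.ne _ _ _ (hF m) fun h => hmn ?_
    exact_mod_cast mul_right_cancel₀ ht h
  · intro hn
    rw [Finsupp.notMem_support_iff.mp hn, map_zero]

theorem coeff_pow_ne_zero {σ : ℤ} {F : LaurentPolynomial R} (h : ∀ n, F.coeff n ≠ 0 → 0 < σ * n)
    (m : ℕ) : ∀ n, (F ^ m).coeff n ≠ 0 → (m : ℤ) ≤ σ * n := by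
  induction m with
  | zero =>
    intro n hn
    rw [pow_zero, ← LaurentPolynomial.T_zero, LaurentPolynomial.T_apply] at hn
    have : (0 : ℤ) = n := by by_contra h; simp [h] at hn
    simp [← this]
  | succ m ih =>
    intro n hn
    rw [pow_succ, AddMonoidAlgebra.coeff_mul_apply_left] at hn
    obtain ⟨i, _, hi⟩ := Finset.exists_ne_zero_of_sum_ne_zero hn
    have h1 := ih i (left_ne_zero_of_mul hi)
    have h2 := h _ (right_ne_zero_of_mul hi)
    push_cast
    rw [mul_add, mul_neg] at h2
    omega

/-- If the exponents of `F` all have the sign of `σ`, those of `F ^ m` move away from any given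
exponent, so that `g * F(1) ^ m` eventually has no component of weight zero. -/
theorem eventually_proj_zero_eq_zero [CharZero K] (hπ : IsWeightProj D π) {t : K} (ht : t ≠ 0)
    {F : LaurentPolynomial R} (hF : IsHom D t F) {σ : ℤ}
    (h : ∀ n, F.coeff n ≠ 0 → 0 < σ * n) (g : R) :
    ∃ N : ℕ, ∀ m, N ≤ m → π 0 (g * evalOne R F ^ m) = 0 := by
  refine hπ.induction (P := fun g => ∃ N : ℕ, ∀ m, N ≤ m → π 0 (g * evalOne R F ^ m) = 0) g
    ⟨0, by simp⟩ ?_ ?_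
  · rintro a b ⟨M, hM⟩ ⟨N, hN⟩
    refine ⟨max M N, fun m hm => ?_⟩
    rw [add_mul, map_add, hM m (le_of_max_le_left hm), hN m (le_of_max_le_right hm), add_zero]
  · intro c a ha
    by_cases hc : ∃ n : ℤ, 0 - c = n * t
    · obtain ⟨n, hn⟩ := hc
      refine ⟨(σ * n).toNat + 1, fun m hm => ?_⟩
      rw [hπ.proj_mul ha, hn, ← map_pow, (hF.pow m).proj_evalOne hπ ht]
      have : (F ^ m).coeff n = 0 := by
        by_contra h0
        have := coeff_pow_ne_zero h m n h0
        omega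
      rw [this, mul_zero]
    · refine ⟨0, fun m _ => ?_⟩
      rw [hπ.proj_mul ha, ← map_pow, evalOne_apply, map_sum, Finset.sum_eq_zero, mul_zero]
      intro n _
      exact hπ.ne _ _ _ (hF.pow m n) fun h => hc ⟨n, h.symm⟩

/-- When all weights are rational multiples of `t`, every element is the value at `T = 1` of a
homogeneous Laurent polynomial; its step is `t` divided by a common denominator. -/
theorem exists_isHom [CharZero K] (hπ : IsWeightProj D π) {t : K} (ht : t ≠ 0)
    (hrat : ∀ c (v : R), v ∈ wt D c → v ≠ 0 → ∃ n : ℕ, n ≠ 0 ∧ ∃ m : ℤ, (n : K) * c = m * t)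
    (f : R) : ∃ t' : K, t' ≠ 0 ∧ ∃ F : LaurentPolynomial R, IsHom D t' F ∧ evalOne R F = f := by
  classical
  obtain ⟨s, hs, hf⟩ := hπ.sum f
  obtain ⟨n, hn, h⟩ := exists_common_multiple (t := t) (s.filter fun c => π c f ≠ 0) (by
    intro c hc
    exact hrat c _ (hπ.mem c f) (Finset.mem_filter.mp hc).2)
  have hn' : (n : K) ≠ 0 := Nat.cast_ne_zero.mpr hn
  choose! m hm using h
  refine ⟨t / n, div_ne_zero ht hn', ∑ c ∈ s.filter fun c => π c f ≠ 0,
    AddMonoidAlgebra.single (m c) (π c f), ?_, ?_⟩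
  · intro i
    rw [AddMonoidAlgebra.coeff_sum, Finsupp.finsetSum_apply]
    refine Submodule.sum_mem _ fun c hc => ?_
    rw [AddMonoidAlgebra.coeff_single, Finsupp.single_apply]
    split_ifs with h
    · convert hπ.mem c f using 2
      rw [← h, mul_div_assoc', ← hm c hc]
      field_simp
    · exact Submodule.zero_mem _
  · rw [map_sum]
    simp only [evalOne, AddMonoidAlgebra.lift_single, MonoidHom.one_apply, smul_eq_mul, mul_one]
    rw [Finset.sum_filter_ne_zero]
    exact hf.symm

end Homogeneous

/-! ### Locally nilpotent derivations -/

section Nilpotent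
variable {K R : Type*} [Field K] [CommRing R] [Algebra K R] {D : Derivation K R R}

theorem exists_iterate_eq_zero {a : R} (ha : a ∈ wt D 0) : ∃ n : ℕ, D^[n] a = 0 := by
  rw [mem_wt] at ha
  obtain ⟨n, hn⟩ := ha
  refine ⟨n, ?_⟩
  rw [zero_smul, sub_zero, Module.End.pow_apply] at hn
  exact hn

/-- Induction along the (finite) `D`-orbit of an element of weight zero. -/
theorem wt_zero_induction {P : R → Prop} (h0 : P 0) (hD : ∀ a ∈ wt D 0, P (D a) → P a) :
    ∀ a ∈ wt D 0, P a := by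
  intro a ha
  obtain ⟨n, hn⟩ := exists_iterate_eq_zero ha
  induction n generalizing a with
  | zero => rw [Function.iterate_zero, id] at hn; rwa [hn]
  | succ n ih => exact hD a ha (ih _ (D_mem_wt ha) hn)

/-- A preslice: an element of weight zero whose derivative is a nonzero kernel element. -/
theorem exists_preslice : ∀ a ∈ wt D 0, D a ≠ 0 → ∃ s ∈ wt D 0, D s ≠ 0 ∧ D (D s) = 0 := by
  refine wt_zero_induction (by simp) fun a ha ih h => ?_
  by_cases h2 : D (D a) = 0
  · exact ⟨a, ha, h, h2⟩
  · exact ih h2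

/-- A derivation with a slice `D s = 1` maps onto its weight-zero part. -/
theorem mem_range_of_slice [CharZero K] {s : R} (hs : D s = 1) :
    ∀ a ∈ wt D 0, a ∈ LinearMap.range D.toLinearMap := by
  suffices h : ∀ a ∈ wt D 0, ∀ j : ℕ, s ^ j * a ∈ LinearMap.range D.toLinearMap by
    intro a ha
    simpa using h a ha 0
  refine wt_zero_induction (by simp) fun a ha ih j => ?_
  have hj : ((j : K) + 1) ≠ 0 := by exact_mod_cast j.succ_ne_zero
  -- integration by parts, lowering the nilpotency order of `a`
  have e : s ^ j * a = D (((j : K) + 1)⁻¹ • (s ^ (j + 1) * a))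
      - ((j : K) + 1)⁻¹ • (s ^ (j + 1) * D a) := by
    rw [D.map_smul, ← smul_sub, eq_inv_smul_iff₀ hj]
    simp only [Derivation.leibniz, Derivation.leibniz_pow, hs, smul_eq_mul, nsmul_eq_mul,
      Nat.cast_add, Nat.cast_one, Nat.add_sub_cancel]
    rw [Algebra.smul_def, map_add, map_natCast, map_one]
    ring
  rw [e]
  exact Submodule.sub_mem _ ⟨_, rfl⟩ (Submodule.smul_mem _ _ (ih (j + 1)))

/-- The leading term of the Leibniz formula for iterates of `D`. -/
theorem iterate_mul (m n : ℕ) : ∀ a b : R, D^[m + 1] a = 0 → D^[n + 1] b = 0 →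
    D^[m + n] (a * b) = (m + n).choose m * (D^[m] a * D^[n] b) := by
  have hz : ∀ j : ℕ, D^[j] 0 = 0 := fun j => iterate_map_zero D j
  induction hs : m + n generalizing m n with
  | zero =>
    intro a b _ _
    obtain ⟨rfl, rfl⟩ : m = 0 ∧ n = 0 := by omega
    simp
  | succ s ih =>
    intro a b ha hb
    rw [Function.iterate_succ_apply, Derivation.leibniz, smul_eq_mul, smul_eq_mul,
      iterate_map_add]
    rcases m with _ | m
    · have hDa : D a = 0 := ha
      obtain rfl : n = s + 1 := by omega
      rw [hDa, mul_zero, hz, add_zero, ih 0 s (by omega) a (D b) ha hb]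
      simp
    · rcases n with _ | n
      · have hDb : D b = 0 := hb
        obtain rfl : m = s := by omega
        rw [hDb, mul_zero, hz, zero_add, mul_comm b, ih m 0 (by omega) (D a) b ha hb]
        simp
      · rw [mul_comm b, ih (m + 1) n (by omega) a (D b) ha hb,
          ih m (n + 1) (by omega) (D a) b ha hb, Nat.choose_succ_succ]
        simp only [Function.iterate_succ_apply]
        push_cast
        ring

/-- The kernel of a locally nilpotent derivation is factorially closed. -/
theorem D_eq_zero_of_mul [IsDomain R] [CharZero R] (hD : ∀ a, a ∈ wt D 0) {a b : R}
    (hab : a * b ≠ 0) (h : D (a * b) = 0) : D a = 0 := by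
  have key : ∀ x : R, x ≠ 0 → ∃ m : ℕ, D^[m] x ≠ 0 ∧ D^[m + 1] x = 0 := by
    intro x hx
    refine wt_zero_induction (P := fun x => x ≠ 0 → ∃ m : ℕ, D^[m] x ≠ 0 ∧ D^[m + 1] x = 0)
      (by simp) ?_ x (hD x) hx
    intro x _ ih hx
    by_cases h : D x = 0
    · exact ⟨0, hx, h⟩
    · obtain ⟨m, h1, h2⟩ := ih h
      exact ⟨m + 1, h1, h2⟩
  obtain ⟨m, hm, hm'⟩ := key a (left_ne_zero_of_mul hab)
  obtain ⟨n, hn, hn'⟩ := key b (right_ne_zero_of_mul hab)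
  rcases m with _ | m
  · exact hm'
  · exfalso
    have h1 := iterate_mul (m + 1) n a b hm' hn'
    rw [show m + 1 + n = (m + n) + 1 by ring, Function.iterate_succ_apply, h,
      iterate_map_zero] at h1
    have h2 : (((m + n + 1).choose (m + 1) : ℕ) : R) ≠ 0 :=
      Nat.cast_ne_zero.mpr (Nat.choose_pos (by omega)).ne'
    exact mul_ne_zero h2 (mul_ne_zero hm hn) h1.symm

end Nilpotent

section Bivariate
variable {K R : Type*} [Field K] [CommRing R] [Algebra K R]

/-- Evaluation of a polynomial in two variables at the pair `(p, s)`. -/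
noncomputable def ev (p s : R) : Polynomial (Polynomial K) →+* R :=
  Polynomial.eval₂RingHom (Polynomial.aeval p : Polynomial K →ₐ[K] R).toRingHom s

theorem ev_C (p s : R) (g : Polynomial K) : ev p s (Polynomial.C g) = Polynomial.aeval p g := by
  simp [ev]

theorem ev_monomial (p s : R) (n : ℕ) (g : Polynomial K) :
    ev p s (Polynomial.monomial n g) = Polynomial.aeval p g * s ^ n := by
  simp [ev]

theorem D_aeval {D : Derivation K R R} {p : R} (hp : D p = 0) (g : Polynomial K) :
    D (Polynomial.aeval p g) = 0 := by
  induction g using Polynomial.induction_on' with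
  | add a b ha hb => rw [map_add, map_add, ha, hb, add_zero]
  | monomial n r => simp [Polynomial.aeval_monomial, hp, Derivation.leibniz_pow]

theorem D_ev {D : Derivation K R R} {p s : R} (hp : D p = 0) (F : Polynomial (Polynomial K)) :
    D (ev p s F) = ev p s (Polynomial.derivative F) * D s := by
  induction F using Polynomial.induction_on' with
  | add a b ha hb => simp only [map_add, ha, hb, add_mul]
  | monomial n g =>
    rw [Polynomial.derivative_monomial, ev_monomial, ev_monomial, Derivation.leibniz,
      D_aeval hp, Derivation.leibniz_pow]
    simp
    ring

theorem exists_antiderivative [CharZero K] (F : Polynomial (Polynomial K)) :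
    ∃ G : Polynomial (Polynomial K), Polynomial.derivative G = F := by
  induction F using Polynomial.induction_on' with
  | add a b ha hb =>
    obtain ⟨x, rfl⟩ := ha
    obtain ⟨y, rfl⟩ := hb
    exact ⟨x + y, map_add _ _ _⟩
  | monomial n g =>
    have hn : ((n : K) + 1) ≠ 0 := by exact_mod_cast n.succ_ne_zero
    refine ⟨Polynomial.monomial (n + 1) (((n : K) + 1)⁻¹ • g), ?_⟩
    rw [Polynomial.derivative_monomial]
    congr 1
    rw [smul_mul_assoc, inv_smul_eq_iff₀ hn, mul_comm, Algebra.smul_def]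
    simp

/-- Modulo `p - c`, evaluation at `(p, s)` agrees with evaluation at `(c, s)`. -/
theorem ev_sub_mem (p s : R) (c : K) (F : Polynomial (Polynomial K)) :
    p - algebraMap K R c ∣
      ev p s F - Polynomial.aeval s (F.map (Polynomial.evalRingHom c)) := by
  induction F using Polynomial.induction_on' with
  | add a b ha hb =>
    convert dvd_add ha hb using 1
    simp only [map_add, Polynomial.map_add]; ring
  | monomial n g =>
    rw [ev_monomial, Polynomial.map_monomial, Polynomial.aeval_monomial, ← sub_mul]
    apply Dvd.dvd.mul_right
    have h := (Polynomial.aeval p : Polynomial K →ₐ[K] R).toRingHom.map_dvd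
      (Polynomial.X_sub_C_dvd_sub_C_eval (a := c) (p := g))
    simpa using h

theorem C_dvd_of_map_eq_zero {c : K} {F : Polynomial (Polynomial K)}
    (h : F.map (Polynomial.evalRingHom c) = 0) :
    Polynomial.C (Polynomial.X - Polynomial.C c) ∣ F := by
  rw [Polynomial.C_dvd_iff_dvd_coeff]
  intro i
  rw [Polynomial.dvd_iff_isRoot]
  have := congrArg (fun G => Polynomial.coeff G i) h
  simpa using this

/-- If `q` is algebraic over `K[p]` and `p - c` is prime, then `q` is constant modulo `p - c`. -/
theorem exists_dvd_sub_of_ev_eq_zero [IsAlgClosed K] [IsDomain R] {p q : R} {c : K}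
    (hp : Prime (p - algebraMap K R c)) {F : Polynomial (Polynomial K)} (hF : F ≠ 0)
    (h : ev p q F = 0) : ∃ d : K, p - algebraMap K R c ∣ q - algebraMap K R d := by
  induction hd : F.leadingCoeff.natDegree using Nat.strong_induction_on generalizing F with
  | _ n ih =>
    -- divide the relation by `X - c` as long as it vanishes at `X = c`
    by_cases hm : F.map (Polynomial.evalRingHom c) = 0
    · obtain ⟨G, rfl⟩ := C_dvd_of_map_eq_zero hm
      have hG : G ≠ 0 := right_ne_zero_of_mul hF
      rw [map_mul, ev_C] at h
      have h1 : Polynomial.aeval p (Polynomial.X - Polynomial.C c) = p - algebraMap K R c := by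
        simp
      rw [h1] at h
      refine ih _ ?_ hG ((mul_eq_zero.mp h).resolve_left hp.ne_zero) rfl
      rw [Polynomial.leadingCoeff_mul, Polynomial.leadingCoeff_C,
        Polynomial.natDegree_mul (Polynomial.X_sub_C_ne_zero c)
          (Polynomial.leadingCoeff_ne_zero.mpr hG), Polynomial.natDegree_X_sub_C] at hd
      omega
    · have h1 := ev_sub_mem p q c F
      rw [h, zero_sub, dvd_neg] at h1
      have : (Ideal.span {p - algebraMap K R c}).IsPrime :=
        (Ideal.span_singleton_prime hp.ne_zero).mpr hp
      obtain ⟨d, hd⟩ := exists_sub_mem_of_aeval_mem (Ideal.span {p - algebraMap K R c}) hm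
        (Ideal.mem_span_singleton.mpr h1)
      exact ⟨d, Ideal.mem_span_singleton.mp hd⟩

end Bivariate

/-! ### Locally nilpotent derivations in two variables -/

section TwoVarNilpotent
variable {K : Type*} [Field K] [IsAlgClosed K] [CharZero K]
  {D : Derivation K (MvPolynomial (Fin 2) K) (MvPolynomial (Fin 2) K)}

/-- Two constants of a nonzero derivation of `K[x,y]` are algebraically dependent. -/
theorem exists_ev_eq_zero {p q a : MvPolynomial (Fin 2) K}
    (hp : ¬ ∃ c : K, p = C c) (hDp : D p = 0) (hDq : D q = 0) (ha : D a ≠ 0) :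
    ∃ F : Polynomial (Polynomial K), F ≠ 0 ∧ ev p q F = 0 := by
  have hpt : Transcendental K p := fun h => hp (eq_const_of_isAlgebraic h)
  have hker : ∀ (s : Set (MvPolynomial (Fin 2) K)), (∀ x ∈ s, D x = 0) →
      ∀ x ∈ Algebra.adjoin K s, D x = 0 := by
    intro s hs x hx
    induction hx using Algebra.adjoin_induction with
    | mem x hx => exact hs x hx
    | algebraMap r => exact D.map_algebraMap r
    | add x y _ _ hx hy => rw [map_add, hx, hy, add_zero]
    | mul x y _ _ hx hy => rw [Derivation.leibniz, hx, hy, smul_zero, smul_zero, add_zero]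
  have hq : IsAlgebraic (Algebra.adjoin K {p}) q := by
    by_contra hq
    refine not_three_indep (a := a) hpt (S := Algebra.adjoin K {p})
      (Algebra.subset_adjoin (Set.mem_singleton p)) hq
      (T := Algebra.adjoin K {p, q}) (Algebra.subset_adjoin (by simp))
      (Algebra.subset_adjoin (by simp)) fun h => ha ?_
    exact D_eq_zero_of_isAlgebraic D (hker _ (by rintro x (rfl | rfl) <;> assumption)) h
  obtain ⟨G, hG, hGq⟩ := hq
  -- lift the coefficients of the relation along `K[X] → K[p]`
  let θ : Polynomial K →ₐ[K] Algebra.adjoin K {p} :=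
    Polynomial.aeval ⟨p, Algebra.subset_adjoin rfl⟩
  have hθ : ∀ g, (θ g : MvPolynomial (Fin 2) K) = Polynomial.aeval p g := by
    intro g
    exact (Polynomial.aeval_algHom_apply (Algebra.adjoin K {p}).val _ g).symm
  have hsurj : Function.Surjective θ := by
    rintro ⟨x, hx⟩
    have hx' := hx
    rw [Algebra.adjoin_singleton_eq_range_aeval] at hx'
    obtain ⟨g, hg⟩ := hx'
    exact ⟨g, Subtype.ext ((hθ g).trans hg)⟩
  obtain ⟨F, rfl⟩ := Polynomial.map_surjective θ.toRingHom hsurj G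
  refine ⟨F, fun h => hG (by rw [h, Polynomial.map_zero]), ?_⟩
  rw [Polynomial.aeval_def, Polynomial.eval₂_map] at hGq
  rw [ev, Polynomial.coe_eval₂RingHom, ← hGq]
  congr 1
  ext g <;> simp [θ]

/-- The kernel of a locally nilpotent derivation is generated by a nonconstant element `p` of
minimal degree, and every `p - c` is prime. -/
theorem exists_ker_generator (hD : ∀ a, a ∈ wt D 0) {p₀ a : MvPolynomial (Fin 2) K}
    (hp₀ : ¬ ∃ c : K, p₀ = C c) (hDp₀ : D p₀ = 0) (ha : D a ≠ 0) :
    ∃ p, D p = 0 ∧ (∀ c : K, Prime (p - C c)) ∧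
      ∀ q, D q = 0 → ∃ g : Polynomial K, q = Polynomial.aeval p g := by
  classical
  have hconst : ∀ q : MvPolynomial (Fin 2) K, (¬ ∃ c : K, q = C c) ↔ 0 < q.totalDegree := by
    intro q
    rw [Nat.pos_iff_ne_zero, not_iff_not, MvPolynomial.totalDegree_eq_zero_iff_eq_C]
    refine ⟨?_, fun h => ⟨_, h⟩⟩
    rintro ⟨c, rfl⟩
    simp
  have hex : ∃ n, ∃ p : MvPolynomial (Fin 2) K,
      (¬ ∃ c : K, p = C c) ∧ D p = 0 ∧ p.totalDegree = n := ⟨_, p₀, hp₀, hDp₀, rfl⟩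
  obtain ⟨p, hp, hDp, hpn⟩ := Nat.find_spec hex
  have hmin : ∀ q : MvPolynomial (Fin 2) K, (¬ ∃ c : K, q = C c) → D q = 0 →
      p.totalDegree ≤ q.totalDegree := by
    intro q hq hDq
    rw [hpn]
    exact Nat.find_min' hex ⟨q, hq, hDq, rfl⟩
  have hprime : ∀ c : K, Prime (p - C c) := by
    intro c
    have hpc : ¬ ∃ d : K, p - C c = C d := by
      rintro ⟨d, hd⟩
      exact hp ⟨d + c, by rw [map_add, ← hd, sub_add_cancel]⟩
    have hDc : D (p - C c) = 0 := by
      rw [map_sub, hDp, zero_sub, neg_eq_zero]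
      exact D.map_algebraMap c
    have hunit : ∀ x : MvPolynomial (Fin 2) K, x ≠ 0 → ¬ IsUnit x → ¬ ∃ d : K, x = C d := by
      rintro x hx0 hx ⟨d, rfl⟩
      exact hx ((isUnit_iff_ne_zero.mpr fun h => hx0 (by rw [h, map_zero])).map C)
    have h0 : p - C c ≠ 0 := fun h => hpc ⟨0, by rw [h, map_zero]⟩
    refine Irreducible.prime ⟨?_, ?_⟩
    · intro h
      obtain ⟨d, -, hd⟩ := MvPolynomial.isUnit_iff_eq_C_of_isReduced.mp h
      exact hpc ⟨d, hd⟩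
    · intro x y hxy
      by_contra hcon
      push Not at hcon
      have hx0 : x ≠ 0 := fun h => h0 (by rw [hxy, h, zero_mul])
      have hy0 : y ≠ 0 := fun h => h0 (by rw [hxy, h, mul_zero])
      have hx := hunit x hx0 hcon.1
      have hy := hunit y hy0 hcon.2
      have h1 := hmin x hx (D_eq_zero_of_mul hD (b := y) (hxy ▸ h0) (hxy ▸ hDc))
      have h2 := MvPolynomial.totalDegree_mul_of_isDomain hx0 hy0
      rw [← hxy] at h2
      have h3 := MvPolynomial.totalDegree_sub_C_le p c
      have h4 := (hconst y).mp hy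
      omega
  refine ⟨p, hDp, hprime, ?_⟩
  intro q hDq
  induction hn : q.totalDegree using Nat.strong_induction_on generalizing q with
  | _ n ih =>
    by_cases hq : ∃ c : K, q = C c
    · obtain ⟨c, rfl⟩ := hq
      exact ⟨Polynomial.C c, by simp [MvPolynomial.algebraMap_eq]⟩
    · obtain ⟨F, hF, hF0⟩ := exists_ev_eq_zero hp hDp hDq ha
      have hp0 : Prime (p - algebraMap K (MvPolynomial (Fin 2) K) 0) := hprime 0
      obtain ⟨d, r, hr⟩ := exists_dvd_sub_of_ev_eq_zero hp0 hF hF0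
      rw [map_zero, sub_zero] at hr hp0
      have hqd : q - C d ≠ 0 := fun h => hq ⟨d, sub_eq_zero.mp h⟩
      have hr' : q - C d = p * r := hr
      have hr0 : r ≠ 0 := fun h => hqd (by rw [hr', h, mul_zero])
      have hDr : D r = 0 := by
        have h1 := congrArg D hr'
        rw [map_sub, hDq, Derivation.leibniz, hDp, smul_zero, add_zero, zero_sub] at h1
        have h2 : D (C d) = 0 := D.map_algebraMap d
        rw [h2, neg_zero, smul_eq_mul] at h1
        exact (mul_eq_zero.mp h1.symm).resolve_left hp0.ne_zero
      have h1 := MvPolynomial.totalDegree_mul_of_isDomain hp0.ne_zero hr0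
      rw [← hr'] at h1
      have h2 := MvPolynomial.totalDegree_sub_C_le q d
      have h3 := (hconst p).mp hp
      obtain ⟨g, hg⟩ := ih r.totalDegree (by omega) r hDr rfl
      refine ⟨Polynomial.X * g + Polynomial.C d, ?_⟩
      rw [map_add, map_mul, ← hg, Polynomial.aeval_X, ← hr', Polynomial.aeval_C,
        MvPolynomial.algebraMap_eq, sub_add_cancel]

/-- The image of a locally nilpotent derivation with a nonconstant kernel element is
an ideal. -/
theorem range_isIdeal_of_nilpotent (hD : ∀ a, a ∈ wt D 0) {p₀ : MvPolynomial (Fin 2) K}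
    (hp₀ : ¬ ∃ c : K, p₀ = C c) (hDp₀ : D p₀ = 0) :
    ∀ g a, a ∈ LinearMap.range D.toLinearMap → g * a ∈ LinearMap.range D.toLinearMap := by
  classical
  by_cases hne : ∃ a, D a ≠ 0
  swap
  · push Not at hne
    rintro g _ ⟨a, rfl⟩
    refine ⟨0, ?_⟩
    change D 0 = g * D a
    rw [hne, hne, mul_zero]
  obtain ⟨a₀, ha₀⟩ := hne
  obtain ⟨p, hDp, hprime, hker⟩ := exists_ker_generator hD hp₀ hDp₀ ha₀
  have hpt : ∀ g : Polynomial K, g ≠ 0 → Polynomial.aeval p g ≠ 0 := by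
    intro g hg h
    obtain ⟨c, hc⟩ := eq_const_of_isAlgebraic (K := K) (q := p) ⟨g, hg, h⟩
    exact (hprime c).ne_zero (sub_eq_zero.mpr hc)
  -- a preslice `s` with `D s = h(p)`, the degree of `h` being minimal
  have hex : ∃ n, ∃ (h : Polynomial K) (s : MvPolynomial (Fin 2) K), h ≠ 0 ∧
      D s = Polynomial.aeval p h ∧ h.natDegree = n := by
    obtain ⟨s, -, hs, hs'⟩ := exists_preslice a₀ (hD a₀) ha₀
    obtain ⟨h, hh⟩ := hker _ hs'
    exact ⟨_, h, s, fun h0 => hs (by rw [hh, h0, map_zero]), hh, rfl⟩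
  obtain ⟨h, s, hh0, hs, hn⟩ := Nat.find_spec hex
  have hmin : ∀ (h' : Polynomial K) (s' : MvPolynomial (Fin 2) K), h' ≠ 0 →
      D s' = Polynomial.aeval p h' → h.natDegree ≤ h'.natDegree := by
    intro h' s' h0 hs'
    rw [hn]
    exact Nat.find_min' hex ⟨h', s', h0, hs', rfl⟩
  -- roots of `h` can be cancelled from elements of `K[p, s]` by minimality of the degree of `h`
  have hcancel : ∀ (c : K), h.IsRoot c → ∀ a, (p - C c) * a ∈ (ev (K := K) p s).range →
      a ∈ (ev (K := K) p s).range := by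
    rintro c hc a ⟨F, hF⟩
    have hpc := hprime c
    by_cases hm : F.map (Polynomial.evalRingHom c) = 0
    · obtain ⟨G, rfl⟩ := C_dvd_of_map_eq_zero hm
      refine ⟨G, ?_⟩
      have h1 : Polynomial.aeval p (Polynomial.X - Polynomial.C c) = p - C c := by
        simp [MvPolynomial.algebraMap_eq]
      rw [map_mul, ev_C, h1] at hF
      exact mul_left_cancel₀ hpc.ne_zero hF
    · exfalso
      have h1 := ev_sub_mem p s c F
      rw [hF, MvPolynomial.algebraMap_eq, dvd_sub_right (dvd_mul_right _ _)] at h1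
      have : (Ideal.span {p - C c}).IsPrime := (Ideal.span_singleton_prime hpc.ne_zero).mpr hpc
      obtain ⟨d, hd⟩ := exists_sub_mem_of_aeval_mem (Ideal.span {p - C c}) hm
        (Ideal.mem_span_singleton.mpr h1)
      obtain ⟨s', hs'⟩ := Ideal.mem_span_singleton.mp hd
      obtain ⟨h', rfl⟩ := Polynomial.dvd_iff_isRoot.mpr hc
      have h0' : h' ≠ 0 := right_ne_zero_of_mul hh0
      have h2 : D s' = Polynomial.aeval p h' := by
        have h3 := congrArg D hs'
        have h4 : D (C c) = 0 := D.map_algebraMap c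
        rw [map_sub, D.map_algebraMap, sub_zero, hs, Derivation.leibniz, map_sub, hDp, h4,
          sub_zero, smul_zero, add_zero, smul_eq_mul, map_mul, map_sub, Polynomial.aeval_X,
          Polynomial.aeval_C, MvPolynomial.algebraMap_eq] at h3
        exact (mul_left_cancel₀ hpc.ne_zero h3).symm
      have h5 := hmin h' s' h0' h2
      rw [Polynomial.natDegree_mul (Polynomial.X_sub_C_ne_zero c) h0',
        Polynomial.natDegree_X_sub_C] at h5
      omega
  have hcancel_factor : ∀ (g : Polynomial K), g ≠ 0 → g ∣ h → ∀ a,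
      Polynomial.aeval p g * a ∈ (ev (K := K) p s).range → a ∈ (ev (K := K) p s).range := by
    intro g hg0 hgh
    induction hd : g.natDegree generalizing g with
    | zero =>
      intro a ha
      rw [Polynomial.eq_C_of_natDegree_eq_zero hd] at ha hg0
      have h0 : g.coeff 0 ≠ 0 := fun h => hg0 (by rw [h, map_zero])
      have := (ev (K := K) p s).range.mul_mem ⟨Polynomial.C (Polynomial.C (g.coeff 0)⁻¹), rfl⟩ ha
      rwa [ev_C, ← mul_assoc, ← map_mul, ← Polynomial.C_mul, inv_mul_cancel₀ h0, map_one,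
        map_one, one_mul] at this
    | succ n ih =>
      intro a ha
      obtain ⟨c, hc⟩ := IsAlgClosed.exists_root g (by
        rw [Polynomial.degree_eq_natDegree hg0, hd]; exact_mod_cast n.succ_ne_zero)
      obtain ⟨r, rfl⟩ := Polynomial.dvd_iff_isRoot.mpr hc
      have hr : r ≠ 0 := right_ne_zero_of_mul hg0
      rw [Polynomial.natDegree_mul (Polynomial.X_sub_C_ne_zero c) hr,
        Polynomial.natDegree_X_sub_C] at hd
      refine ih r hr (dvd_of_mul_left_dvd hgh) (by omega) a (hcancel c ?_ _ ?_)
      · exact Polynomial.dvd_iff_isRoot.mp (dvd_of_mul_right_dvd hgh)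
      · rw [map_mul, mul_assoc] at ha
        simpa [MvPolynomial.algebraMap_eq] using ha
  -- by induction on the orbit, every element is a polynomial in `p` and `s`
  have hall : ∀ a ∈ wt D 0, a ∈ (ev (K := K) p s).range := by
    refine wt_zero_induction ⟨0, map_zero _⟩ ?_
    rintro a - ⟨F, hF⟩
    obtain ⟨G, rfl⟩ := exists_antiderivative F
    have hD0 : D (Polynomial.aeval p h * a - ev p s G) = 0 := by
      rw [map_sub, D_ev hDp, hF, hs, Derivation.leibniz, D_aeval hDp, smul_zero, add_zero,
        smul_eq_mul, mul_comm, sub_self]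
    obtain ⟨g, hg⟩ := hker _ hD0
    refine hcancel_factor h hh0 dvd_rfl a ⟨G + Polynomial.C g, ?_⟩
    rw [map_add, ev_C, ← hg]
    ring
  rintro g _ ⟨a, rfl⟩
  obtain ⟨F, hF⟩ := hall a (hD a)
  obtain ⟨G, hG⟩ := hall g (hD g)
  obtain ⟨H, hH⟩ := exists_antiderivative (G * Polynomial.derivative F)
  refine ⟨ev p s H, ?_⟩
  change D (ev p s H) = g * D a
  rw [D_ev hDp, hH, ← hF, D_ev hDp, ← hG, map_mul, mul_assoc]

end TwoVarNilpotent

/-! ### The theorem over an algebraically closed field -/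

section AlgClosed
variable {K : Type*} [Field K]
  {D : Derivation K (MvPolynomial (Fin 2) K) (MvPolynomial (Fin 2) K)}
  {π : K → MvPolynomial (Fin 2) K →ₗ[K] MvPolynomial (Fin 2) K}

theorem isMathieu_of_isIdeal {R : Type*} [CommRing R] [Algebra K R] {M : Submodule K R}
    (h : ∀ g, ∀ a ∈ M, g * a ∈ M) : IsMathieu K M :=
  fun _ hf g => ⟨1, fun m hm => h g _ (hf m hm)⟩

/-- If only constants have weight zero, then `Im D` is an ideal: a nonzero constant arising as a
product `g * b` of weight vectors of opposite weights would make `g` a unit. -/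
theorem range_isIdeal_of_wt_zero_const (hπ : IsWeightProj D π)
    (h0 : ∀ a ∈ wt D 0, ∃ c : K, a = C c) :
    ∀ g, ∀ a ∈ LinearMap.range D.toLinearMap, g * a ∈ LinearMap.range D.toLinearMap := by
  have hiff : ∀ a, a ∈ LinearMap.range D.toLinearMap ↔ π 0 a = 0 := by
    intro a
    rw [hπ.mem_range_iff]
    constructor
    · rintro ⟨b, hb, h⟩
      obtain ⟨c, rfl⟩ := h0 b hb
      rw [← h]
      exact D.map_algebraMap c
    · intro h
      exact ⟨0, Submodule.zero_mem _, by rw [h, map_zero]⟩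
  intro g a ha
  rw [hiff] at ha ⊢
  refine hπ.induction (P := fun g => π 0 (g * a) = 0) g (by simp)
    (fun x y hx hy => by rw [add_mul, map_add, hx, hy, add_zero]) fun c g hg => ?_
  rw [hπ.proj_mul hg]
  by_cases hc : c = 0
  · rw [hc, sub_zero, ha, mul_zero]
  · have hmem : g * π (0 - c) a ∈ wt D 0 := by
      simpa using mul_mem_wt hg (hπ.mem (0 - c) a)
    obtain ⟨e, he⟩ := h0 _ hmem
    by_cases he0 : e = 0
    · rw [he, he0, map_zero]
    · exfalso
      have hu : IsUnit (g * π (0 - c) a) := by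
        rw [he]; exact (isUnit_iff_ne_zero.mpr he0).map C
      have hgu : IsUnit g := isUnit_of_mul_isUnit_left hu
      obtain ⟨r, -, rfl⟩ := MvPolynomial.isUnit_iff_eq_C_of_isReduced.mp hgu
      refine hgu.ne_zero (hπ.eq_zero hc hg (mem_wt_of_eigen ?_))
      rw [zero_smul]
      exact D.map_algebraMap r

variable [CharZero K]

/-- If `D` does not kill weight zero but has only constants there in its kernel, then `D` has a
slice, and is surjective. -/
theorem range_eq_top_of_slice (hπ : IsWeightProj D π)
    (h1 : ∀ a ∈ wt D 0, D a = 0 → ∃ c : K, a = C c)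
    {a : MvPolynomial (Fin 2) K} (ha : a ∈ wt D 0) (hDa : D a ≠ 0) :
    ∀ b, b ∈ LinearMap.range D.toLinearMap := by
  obtain ⟨s, hs, hDs, hDDs⟩ := exists_preslice a ha hDa
  obtain ⟨e, he⟩ := h1 _ (D_mem_wt hs) hDDs
  have he0 : e ≠ 0 := fun h => hDs (by rw [he, h, map_zero])
  have hslice : D (e⁻¹ • s) = 1 := by
    rw [D.map_smul, he, MvPolynomial.smul_eq_C_mul, ← map_mul, inv_mul_cancel₀ he0, map_one]
  intro b
  refine hπ.induction (P := fun b => b ∈ LinearMap.range D.toLinearMap) b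
    (Submodule.zero_mem _) (fun x y hx hy => Submodule.add_mem _ hx hy) fun c x hx => ?_
  by_cases hc : c = 0
  · subst hc
    exact mem_range_of_slice hslice x hx
  · exact IsWeightProj.mem_range_of_ne hc hx

variable [IsAlgClosed K]

/-- The case of a nonconstant kernel element together with a nonzero weight. The transcendence
degree bound forces all weights to be commensurable and `D` to vanish in weight zero, so that `Im D` consists of the polynomials without component of weight zero. -/
theorem isMathieu_of_kernel_of_weight (hπ : IsWeightProj D π) {p : MvPolynomial (Fin 2) K}
    (hp : ¬ ∃ c : K, p = C c) (hDp : D p = 0) {l : K} (hl : l ≠ 0)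
    {u : MvPolynomial (Fin 2) K} (hu : u ∈ wt D l) (hu0 : u ≠ 0) :
    IsMathieu K (LinearMap.range D.toLinearMap) := by
  have hpt : Transcendental K p := fun h => hp (eq_const_of_isAlgebraic h)
  have hpwt : p ∈ wt D 0 := mem_wt_of_eigen (by rw [hDp, zero_smul])
  have hut : Transcendental (wtAlg hπ ⊥) u := by
    refine transcendental_of_weight hπ hu hu0 fun n hn h => ?_
    rw [AddSubgroup.mem_bot] at h
    exact mul_ne_zero (Nat.cast_ne_zero.mpr hn) hl h
  have hker : ∀ x ∈ Algebra.adjoin K {p}, D x = 0 := by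
    intro x hx
    rw [Algebra.adjoin_singleton_eq_range_aeval] at hx
    obtain ⟨g, rfl⟩ := hx
    exact D_aeval hDp g
  have hD0 : ∀ a ∈ wt D 0, D a = 0 := by
    intro a ha
    by_contra hDa
    have hat : Transcendental (Algebra.adjoin K {p}) a := fun h =>
      hDa (D_eq_zero_of_isAlgebraic D hker h)
    exact not_three_indep hpt (Algebra.subset_adjoin (Set.mem_singleton p)) hat
      (mem_wtAlg_of_mem_wt hπ (zero_mem ⊥) hpwt) (mem_wtAlg_of_mem_wt hπ (zero_mem ⊥) ha) hut
  have hrat : ∀ c (v : MvPolynomial (Fin 2) K), v ∈ wt D c → v ≠ 0 →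
      ∃ n : ℕ, n ≠ 0 ∧ ∃ m : ℤ, (n : K) * c = m * l := by
    intro c v hv hv0
    by_contra hcon
    push Not at hcon
    have hvt : Transcendental (wtAlg hπ (AddSubgroup.zmultiples l)) v := by
      refine transcendental_of_weight hπ hv hv0 fun n hn h => ?_
      obtain ⟨m, hm⟩ := AddSubgroup.mem_zmultiples_iff.mp h
      exact hcon n hn m (by rw [← hm, zsmul_eq_mul])
    exact not_three_indep hpt (mem_wtAlg_of_mem_wt hπ (zero_mem ⊥) hpwt) hut
      (mem_wtAlg_of_mem_wt hπ (zero_mem _) hpwt)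
      (mem_wtAlg_of_mem_wt hπ (AddSubgroup.mem_zmultiples l) hu) hvt
  have hiff : ∀ a, a ∈ LinearMap.range D.toLinearMap ↔ π 0 a = 0 := by
    intro a
    rw [hπ.mem_range_iff]
    constructor
    · rintro ⟨b, hb, h⟩
      rw [← h, hD0 b hb]
    · intro h
      exact ⟨0, Submodule.zero_mem _, by rw [h, map_zero]⟩
  intro f hf g
  obtain ⟨t, ht, F, hF, rfl⟩ := exists_isHom hπ hl hrat f
  have hcoeff : ∀ m : ℕ, 1 ≤ m → (F ^ m).coeff 0 = 0 := by
    intro m hm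
    rw [← (hF.pow m).proj_evalOne hπ ht, map_pow, Int.cast_zero, zero_mul]
    exact (hiff _).mp (hf m hm)
  obtain ⟨σ, hσ⟩ : ∃ σ : ℤ, ∀ n, F.coeff n ≠ 0 → 0 < σ * n := by
    rcases dvdk_domain F hcoeff with h | h
    · exact ⟨1, fun n hn => by have := h n hn; omega⟩
    · exact ⟨-1, fun n hn => by have := h n hn; omega⟩
  obtain ⟨N, hN⟩ := eventually_proj_zero_eq_zero hπ ht hF hσ g
  exact ⟨N, fun m hm => (hiff _).mpr (hN m hm)⟩

/-- The theorem over an algebraically closed field, given a weight decomposition. -/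
theorem isMathieu_of_weightProj (hπ : IsWeightProj D π) :
    IsMathieu K (LinearMap.range D.toLinearMap) := by
  by_cases h1 : ∃ p, (¬ ∃ c : K, p = C c) ∧ D p = 0
  · obtain ⟨p, hp, hDp⟩ := h1
    by_cases h2 : ∀ a, a ∈ wt D 0
    · exact isMathieu_of_isIdeal (range_isIdeal_of_nilpotent h2 hp hDp)
    · have h3 : ∃ l : K, l ≠ 0 ∧ ∃ u ∈ wt D l, u ≠ 0 := by
        by_contra hcon
        push Not at hcon
        refine h2 fun a => hπ.induction (P := fun a => a ∈ wt D 0) a (Submodule.zero_mem _)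
          (fun x y hx hy => Submodule.add_mem _ hx hy) fun c x hx => ?_
        by_cases hc : c = 0
        · rwa [hc] at hx
        · rw [hcon c hc x hx]
          exact Submodule.zero_mem _
      obtain ⟨l, hl, u, hu, hu0⟩ := h3
      exact isMathieu_of_kernel_of_weight hπ hp hDp hl hu hu0
  · have h1' : ∀ a ∈ wt D 0, D a = 0 → ∃ c : K, a = C c := by
      intro a _ ha
      by_contra hc
      exact h1 ⟨a, hc, ha⟩
    by_cases h2 : ∃ a ∈ wt D 0, D a ≠ 0
    · obtain ⟨a, ha, hDa⟩ := h2
      exact isMathieu_of_isIdeal fun g b _ => range_eq_top_of_slice hπ h1' ha hDa (g * b)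
    · push Not at h2
      exact isMathieu_of_isIdeal
        (range_isIdeal_of_wt_zero_const hπ fun a ha => h1' a ha (h2 a ha))

end AlgClosed

/-! ### Descent from the algebraic closure -/

section BaseChange

/-- A locally finite derivation is locally algebraic. Local finiteness only bounds the powers
`D ^ i` with `i ≥ 1`, so the relation produced is divisible by the variable. -/
theorem exists_aeval_eq_zero {k R : Type*} [Field k] [CommRing R] [Algebra k R]
    {D : Derivation k R R} (hD : IsLocallyFinite D) (a : R) :
    ∃ p : Polynomial k, p ≠ 0 ∧ Polynomial.aeval D.toLinearMap p a = 0 := by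
  have := hD a
  set W := Submodule.span k (Set.range fun i : ℕ => (D.toLinearMap ^ (i + 1)) a) with hW
  have hdep : ¬ LinearIndependent k (fun i : ℕ => (⟨(D.toLinearMap ^ (i + 1)) a,
      Submodule.subset_span ⟨i, rfl⟩⟩ : W)) := fun h => by
    have := h.finite
    exact not_finite ℕ
  rw [linearIndependent_iff'] at hdep
  push Not at hdep
  obtain ⟨s, g, hg, i, hi, hgi⟩ := hdep
  refine ⟨∑ j ∈ s, Polynomial.monomial (j + 1) (g j), fun h => hgi ?_, ?_⟩
  · have h1 := congrArg (fun p => Polynomial.coeff p (i + 1)) h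
    simpa [Polynomial.finsetSum_coeff, Polynomial.coeff_monomial, hi] using h1
  · have h1 := congrArg (Submodule.subtype W) hg
    simpa [Polynomial.aeval_monomial, LinearMap.sum_apply] using h1

variable {k K : Type*} [Field k] [Field K] [Algebra k K]

/-- The `K`-linear extension of a derivation of `k[x,y]` to `K[x,y]`. -/
noncomputable def extendScalars (K : Type*) [Field K] [Algebra k K]
    (D : Derivation k (MvPolynomial (Fin 2) k) (MvPolynomial (Fin 2) k)) :
    Derivation K (MvPolynomial (Fin 2) K) (MvPolynomial (Fin 2) K) :=
  MvPolynomial.mkDerivation K fun i => MvPolynomial.map (algebraMap k K) (D (X i))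

variable (D : Derivation k (MvPolynomial (Fin 2) k) (MvPolynomial (Fin 2) k))

theorem extendScalars_map (a : MvPolynomial (Fin 2) k) :
    extendScalars K D (map (algebraMap k K) a) = map (algebraMap k K) (D a) := by
  induction a using MvPolynomial.induction_on with
  | C c =>
    have h1 : D (C c) = 0 := D.map_algebraMap c
    have h2 : extendScalars K D (C (algebraMap k K c)) = 0 :=
      (extendScalars K D).map_algebraMap _
    rw [map_C, h1, h2, map_zero]
  | add a b ha hb => simp only [map_add, ha, hb]
  | mul_X a i ha =>
    rw [map_mul, Derivation.leibniz, ha, Derivation.leibniz, map_X]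
    have : extendScalars K D (X i) = map (algebraMap k K) (D (X i)) := by
      simp [extendScalars]
    simp [this]

theorem extendScalars_aeval (a : MvPolynomial (Fin 2) k) (p : Polynomial k) :
    Polynomial.aeval (extendScalars K D).toLinearMap (p.map (algebraMap k K))
        (map (algebraMap k K) a) =
      map (algebraMap k K) (Polynomial.aeval D.toLinearMap p a) := by
  have hpow : ∀ n : ℕ, ((extendScalars K D).toLinearMap ^ n) (map (algebraMap k K) a) =
      map (algebraMap k K) ((D.toLinearMap ^ n) a) := by
    intro n
    induction n with
    | zero => simp
    | succ n ih =>
      rw [pow_succ', Module.End.mul_apply, ih, pow_succ', Module.End.mul_apply]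
      exact extendScalars_map D _
  induction p using Polynomial.induction_on' with
  | add p q hp hq => simp only [Polynomial.map_add, map_add, LinearMap.add_apply, hp, hq]
  | monomial n r =>
    simp [Polynomial.aeval_monomial, hpow, Algebra.smul_def,
      MvPolynomial.algebraMap_eq]

/-- Local algebraicity passes to the extension of scalars, which is spanned over `K` by the
monomials of `k[x,y]`. -/
theorem exists_aeval_extendScalars_eq_zero
    {D : Derivation k (MvPolynomial (Fin 2) k) (MvPolynomial (Fin 2) k)}
    (hD : ∀ a : MvPolynomial (Fin 2) k,
      ∃ p : Polynomial k, p ≠ 0 ∧ Polynomial.aeval D.toLinearMap p a = 0)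
    (b : MvPolynomial (Fin 2) K) :
    ∃ p : Polynomial K, p ≠ 0 ∧ Polynomial.aeval (extendScalars K D).toLinearMap p b = 0 := by
  induction b using MvPolynomial.induction_on' with
  | monomial s c =>
    obtain ⟨p, hp, h⟩ := hD (monomial s 1)
    refine ⟨p.map (algebraMap k K), (Polynomial.map_ne_zero_iff (algebraMap k K).injective).mpr hp,
      ?_⟩
    have h1 : (monomial s c : MvPolynomial (Fin 2) K) =
        c • map (algebraMap k K) (monomial s 1) := by
      simp [MvPolynomial.map_monomial, MvPolynomial.smul_monomial]
    rw [h1, map_smul, extendScalars_aeval, h, map_zero, smul_zero]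
  | add a b ha hb =>
    obtain ⟨p, hp, h⟩ := ha
    obtain ⟨q, hq, h'⟩ := hb
    refine ⟨p * q, mul_ne_zero hp hq, ?_⟩
    have hb : Polynomial.aeval (extendScalars K D).toLinearMap (p * q) b = 0 := by
      rw [map_mul, Module.End.mul_apply, h', map_zero]
    have ha : Polynomial.aeval (extendScalars K D).toLinearMap (p * q) a = 0 := by
      rw [mul_comm, map_mul, Module.End.mul_apply, h, map_zero]
    rw [map_add, ha, hb, add_zero]

/-- The map `K[x,y] → k[x,y]` applying a `k`-linear form on `K` to every coefficient. -/
noncomputable def coeffMap (φ : K →ₗ[k] k) (b : MvPolynomial (Fin 2) K) :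
    MvPolynomial (Fin 2) k :=
  ∑ s ∈ b.support, monomial s (φ (b.coeff s))

theorem coeff_coeffMap (φ : K →ₗ[k] k) (b : MvPolynomial (Fin 2) K) (s : Fin 2 →₀ ℕ) :
    (coeffMap φ b).coeff s = φ (b.coeff s) := by
  classical
  rw [coeffMap, MvPolynomial.coeff_sum]
  simp only [MvPolynomial.coeff_monomial, Finset.sum_ite_eq']
  split_ifs with h
  · rfl
  · rw [MvPolynomial.notMem_support_iff.mp h, map_zero]

theorem coeffMap_add (φ : K →ₗ[k] k) (a b : MvPolynomial (Fin 2) K) :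
    coeffMap φ (a + b) = coeffMap φ a + coeffMap φ b := by
  ext s
  simp [coeff_coeffMap]

theorem coeffMap_smul_map (φ : K →ₗ[k] k) (c : K) (a : MvPolynomial (Fin 2) k) :
    coeffMap φ (c • map (algebraMap k K) a) = φ c • a := by
  ext s
  rw [coeff_coeffMap, MvPolynomial.coeff_smul, MvPolynomial.coeff_map, MvPolynomial.coeff_smul,
    smul_eq_mul, mul_comm, ← Algebra.smul_def, map_smul, smul_eq_mul, smul_eq_mul, mul_comm]

theorem coeffMap_extendScalars (φ : K →ₗ[k] k) (b : MvPolynomial (Fin 2) K) :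
    coeffMap φ (extendScalars K D b) = D (coeffMap φ b) := by
  induction b using MvPolynomial.induction_on' with
  | monomial s c =>
    have h1 : (monomial s c : MvPolynomial (Fin 2) K) =
        c • map (algebraMap k K) (monomial s 1) := by
      simp [MvPolynomial.map_monomial, MvPolynomial.smul_monomial]
    rw [h1, (extendScalars K D).map_smul, extendScalars_map, coeffMap_smul_map, coeffMap_smul_map,
      D.map_smul]
  | add a b ha hb => rw [map_add, coeffMap_add, coeffMap_add, map_add, ha, hb]

/-- The image of `D` is the trace on `k[x,y]` of the image of its extension to `K[x,y]`: a
`k`-linear retraction `K → k`, applied to coefficients, commutes with the derivations. -/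
theorem map_mem_range_iff (a : MvPolynomial (Fin 2) k) :
    map (algebraMap k K) a ∈ LinearMap.range (extendScalars K D).toLinearMap ↔
      a ∈ LinearMap.range D.toLinearMap := by
  constructor
  · rintro ⟨b, hb⟩
    obtain ⟨φ, hφ⟩ := (Algebra.linearMap k K).exists_leftInverse_of_injective
      (LinearMap.ker_eq_bot.mpr (algebraMap k K).injective)
    have h1 : φ 1 = 1 := by simpa using LinearMap.congr_fun hφ 1
    refine ⟨coeffMap φ b, ?_⟩
    change D _ = a
    rw [← coeffMap_extendScalars]
    change extendScalars K D b = _ at hb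
    rw [hb, ← one_smul K (map (algebraMap k K) a), coeffMap_smul_map, h1, one_smul]
  · rintro ⟨b, rfl⟩
    exact ⟨map (algebraMap k K) b, extendScalars_map D b⟩

end BaseChange

/-- The image of a locally finite `k`-derivation of `k[x,y]` is a Mathieu subspace. -/
theorem locallyFinite_deriv_mathieu (k : Type*) [Field k] [CharZero k]
    (D : Derivation k (MvPolynomial (Fin 2) k) (MvPolynomial (Fin 2) k))
    (hD : IsLocallyFinite D) :
    IsMathieu k (LinearMap.range D.toLinearMap) := by
  obtain ⟨π, hπ⟩ := exists_weightProj (extendScalars (AlgebraicClosure k) D)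
    (exists_aeval_extendScalars_eq_zero (exists_aeval_eq_zero hD))
  intro f hf g
  obtain ⟨N, hN⟩ := isMathieu_of_weightProj hπ (map (algebraMap k (AlgebraicClosure k)) f)
    (fun m hm => by
      rw [← map_pow, map_mem_range_iff]
      exact hf m hm) (map (algebraMap k (AlgebraicClosure k)) g)
  refine ⟨N, fun m hm => ?_⟩
  have h := hN m hm
  rwa [← map_pow, ← map_mul, map_mem_range_iff] at h
end

section
/- The two-dimensional Jacobian conjecture over a field k of characteristic zero holds if and only if: for every k-derivation D = p∂_x + q∂_y of k[x,y] with div D := ∂_x p + ∂_y q = 0 and 1 ∈ Im D, the image Im D is a Mathieu subspace of k[x,y] (equivalently, D is surjective). -/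
/-!
A divergence-free derivation `D` of `k[x, y]` is, by Poincaré's lemma, the Hamiltonian derivation
`D a = a_x g_y - a_y g_x` of some polynomial `g`; and `D s = 1` says that `(s, g)` has Jacobian
determinant one. If the Jacobian conjecture holds, then `k[s, g] = k[x, y]` and `D` is `∂/∂s`, which
is surjective (`surjective_of_jacobian`), so its image is trivially a Mathieu subspace.

Conversely let `(f, g)` have Jacobian determinant one, and let `D` be the Hamiltonian derivation of
`g`, so that `D f = 1` and `D g = 0`. Its image contains `1`, so if it is a Mathieu subspace it is
everything. By Stein's theorem `D` is then locally nilpotent (`locally_nilpotent`). Its kernel is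
`k[g]` (`eq_aeval_of_jacobian_eq_zero`), and integrating with respect to `f` gives
`k[f, g] = k[x, y]` (`adjoin_eq_top_of_surjective`).

Stein's theorem is proved by means of valuations. Extend `D` to the fraction field `L`, let `K` be
its field of constants, and let `R` be the `K`-algebra generated by `k[x, y]`. Since `g` is a
transcendental constant, `L` is finite over `K(f)`, that is, the function field of a curve. At a
place where a function `s` vanishes, a derivation `θ` with `θ s = s` multiplies every function of
nonzero order by a unit, and takes no values of order zero (`place_log`).

* At places over a finite value of `f`, let `s` be a local parameter of `K[f]` and rescale `D` to a
  `θ` with `θ s = s`. A pole of an element of `R` would produce, by surjectivity, a value of `θ` of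
  order zero. So `R` is integral over `K[f]` (`integral_of_surjective`).
* At places over `f = ∞`, take `s = 1 / f` and `θ = -f D`: the derivation `D` strictly lowers pole
  orders. So some iterate `D^[j] a` has no poles at all, is algebraic over `K`, and is killed by `D`
  (`nilpotent_of_integral`).
-/

open MvPolynomial

/-- The two-dimensional Jacobian conjecture over `k`: every pair `(f, g)` in `k[x,y]`
with Jacobian determinant `1` generates `k[x,y]` as a `k`-algebra. -/
def JacobianConjecture2 (k : Type*) [Field k] : Prop :=
  ∀ f g : MvPolynomial (Fin 2) k,
    pderiv 0 f * pderiv 1 g - pderiv 1 f * pderiv 0 g = 1 →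
      Algebra.adjoin k {f, g} = (⊤ : Subalgebra k (MvPolynomial (Fin 2) k))

/-! ### Logarithmic derivations and discrete valuations -/

open Polynomial WithZero in
/-- Let `v` be a discrete valuation whose residue field is separable algebraic over `K` (the
hypothesis `hres`), and let `θ` be a `K`-derivation with `θ s = s` for some `s` with `0 < v s < 1`.
If `θ` is bounded on the valuation ring, it maps the valuation ring into the maximal ideal.

Otherwise the maximum `M ≥ 1` of `v ∘ θ` on the valuation ring is attained at a uniformizer `ϖ`.
Writing `ϖ ^ e = s * u` with `u` a unit and applying `θ` gives `e * u * θ ϖ = ϖ * (u + θ u)`, so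
`M = v (θ ϖ) ≤ v ϖ * M < M`. -/
theorem val_log_aux {K L : Type*} [Field K] [Field L] [Algebra K L]
    (v : Valuation L ℤᵐ⁰) (hnat : ∀ n : ℕ, n ≠ 0 → v (n : L) = 1)
    (θ : Derivation K L L) (s : L) (hs0 : s ≠ 0) (hs1 : v s < 1) (hθs : θ s = s)
    (hϖ : ∃ ϖ : L, v ϖ = exp (-1 : ℤ))
    (hres : ∀ x, v x ≤ 1 → ∃ (b : L) (h : K[X]), v b ≤ 1 ∧ v (x - b) < 1 ∧ v (aeval b h) < 1 ∧
      v (aeval b (derivative h)) = 1)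
    (hbd : ∃ C : ℤᵐ⁰, ∀ x, v x ≤ 1 → v (θ x) ≤ C) :
    ∀ x, v x ≤ 1 → v (θ x) < 1 := by
  obtain ⟨ϖ, hϖ⟩ := hϖ
  have hε : exp (-1 : ℤ) < 1 := by rw [← exp_zero, exp_lt_exp]; norm_num
  have hϖ0 : ϖ ≠ 0 := by
    rintro rfl
    rw [map_zero] at hϖ
    exact exp_ne_zero hϖ.symm
  have hdiv : ∀ z, v z < 1 → v (z / ϖ) ≤ 1 := by
    intro z hz
    rcases eq_or_ne z 0 with rfl | hz0
    · simp
    have hvz : v z ≠ 0 := (v.ne_zero_iff).2 hz0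
    rw [map_div₀, hϖ, ← exp_log hvz, ← exp_sub, ← exp_zero, exp_le_exp]
    have : log (v z) < 0 := by rw [← exp_lt_exp, exp_log hvz, exp_zero]; exact hz
    omega
  by_contra! hcon
  obtain ⟨x₀, hx₀, hx₀'⟩ := hcon
  obtain ⟨C, hC⟩ := hbd
  -- the largest value of `θ` on the valuation ring is attained at some `a`
  obtain ⟨a, ha, hM1, hmax⟩ : ∃ a, v a ≤ 1 ∧ 1 ≤ v (θ a) ∧ ∀ x, v x ≤ 1 → v (θ x) ≤ v (θ a) := by
    have hpos : ∀ {y : ℤᵐ⁰}, 1 ≤ y → y ≠ 0 := fun h => (zero_lt_one.trans_le h).ne'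
    obtain ⟨m, ⟨a, ha, ha'⟩, hm⟩ := Int.exists_greatest_of_bdd
      (P := fun m => ∃ x, v x ≤ 1 ∧ v (θ x) = exp m)
      ⟨log C, by
        rintro m ⟨x, hx, hxm⟩
        have h1 := hC x hx
        have hC0 : C ≠ 0 := hpos (hx₀'.trans (hC x₀ hx₀))
        rw [hxm] at h1
        rwa [← exp_le_exp, exp_log hC0]⟩
      ⟨log (v (θ x₀)), x₀, hx₀, (exp_log (hpos hx₀')).symm⟩
    have key : ∀ x, v x ≤ 1 → v (θ x) ≤ v (θ a) := by
      intro x hx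
      rcases eq_or_ne (v (θ x)) 0 with h | h
      · rw [h]; exact zero_le
      · rw [ha', ← exp_log h, exp_le_exp]
        exact hm _ ⟨x, hx, (exp_log h).symm⟩
    exact ⟨a, ha, hx₀'.trans (key x₀ hx₀), key⟩
  set M := v (θ a) with hM
  have hM0 : 0 < M := zero_lt_one.trans_le hM1
  have hεM : exp (-1 : ℤ) * M < M := mul_lt_of_lt_one_left hM0 hε
  -- the maximum is also attained at a uniformizer
  have hat : ∀ z, v z < 1 → v (θ z) = M → v (θ ϖ) = M := by
    intro z hz hzM
    have hr := hdiv z hz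
    have hz' : θ z = ϖ * θ (z / ϖ) + (z / ϖ) * θ ϖ := by
      have : z = ϖ * (z / ϖ) := by field_simp
      conv_lhs => rw [this]
      rw [Derivation.leibniz]; simp
    have h1 : v (ϖ * θ (z / ϖ)) < M := by
      rw [map_mul, hϖ]
      exact (mul_le_mul_right (hmax _ hr) _).trans_lt hεM
    have h2 : M ≤ v ((z / ϖ) * θ ϖ) := by
      by_contra! h
      have := v.map_add_lt h1 h
      rw [← hz', hzM] at this
      exact this.false
    refine le_antisymm (hmax _ (hϖ.trans_le hε.le)) (h2.trans ?_)
    rw [map_mul]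
    exact mul_le_of_le_one_left' hr
  have hϖM : v (θ ϖ) = M := by
    obtain ⟨b, h, hb, hab, hh, hh'⟩ := hres a ha
    by_cases hc : v (θ (a - b)) = M
    · exact hat _ hab hc
    · have hc' : v (θ (a - b)) < M := lt_of_le_of_ne (hmax _ hab.le) hc
      refine hat _ hh ?_
      have hbM : v (θ b) = M := by
        refine le_antisymm (hmax _ hb) ?_
        by_contra! h
        have := v.map_add_lt hc' h
        rw [← map_add, sub_add_cancel] at this
        exact this.false
      rw [Derivation.map_aeval, smul_eq_mul, map_mul, hh', one_mul, hbM]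
  -- compare with the logarithmic derivative of `s`
  have hvs : v s ≠ 0 := (v.ne_zero_iff).2 hs0
  obtain ⟨e, he⟩ : ∃ e : ℕ, log (v s) = -(e : ℤ) := by
    have : log (v s) < 0 := by rw [← exp_lt_exp, exp_log hvs, exp_zero]; exact hs1
    exact ⟨(-log (v s)).toNat, by omega⟩
  have he0 : e ≠ 0 := by
    rintro rfl
    rw [← exp_log hvs, he] at hs1
    simp at hs1
  have hvse : v s = exp (-1 : ℤ) ^ e := by
    rw [← exp_nsmul, ← exp_log hvs, he]; simp
  -- `u` is the unit with `ϖ ^ e = s * u`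
  set u := ϖ ^ e / s with hu
  have hvu : v u = 1 := by
    rw [hu, map_div₀, map_pow, hϖ, hvse, div_self]
    exact pow_ne_zero _ exp_ne_zero
  have hsu : ϖ ^ e = s * u := by rw [hu]; field_simp
  have hid : (e : L) * u * θ ϖ = ϖ * (u + θ u) := by
    have h1 := congrArg θ hsu
    rw [Derivation.leibniz_pow, Derivation.leibniz, hθs] at h1
    simp only [smul_eq_mul, nsmul_eq_mul] at h1
    have h2 : ϖ * ((e : L) * (ϖ ^ (e - 1) * θ ϖ)) = e * ϖ ^ e * θ ϖ := by
      obtain ⟨n, rfl⟩ := Nat.exists_eq_succ_of_ne_zero he0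
      simp; ring
    rw [h1, hsu] at h2
    apply mul_left_cancel₀ hs0
    linear_combination -h2
  have h3 := congrArg v hid
  simp only [map_mul, hnat e he0, hvu, hϖM, hϖ, one_mul] at h3
  have h4 : v (u + θ u) ≤ M :=
    (v.map_add _ _).trans (max_le (hvu.trans_le hM1) (hmax u hvu.le))
  have : M < M := by
    conv_lhs => rw [h3]
    exact (mul_le_mul_right h4 _).trans_lt hεM
  exact this.false

open Polynomial WithZero in
/-- In the situation of `val_log_aux`, once `θ` maps the valuation ring into the maximal ideal,
`v (θ x) = v x` whenever `v x ≠ 1`. So `θ` never lowers the order of a function, and no `θ x` has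
value one. -/
theorem val_log {K L : Type*} [Field K] [Field L] [Algebra K L]
    (v : Valuation L ℤᵐ⁰) (hnat : ∀ n : ℕ, n ≠ 0 → v (n : L) = 1)
    (θ : Derivation K L L) (s : L) (hs0 : s ≠ 0) (hs1 : v s < 1) (hθs : θ s = s)
    (hθ : ∀ x, v x ≤ 1 → v (θ x) < 1) :
    (∀ x, v (θ x) ≤ v x) ∧ ∀ x, v (θ x) ≠ 1 := by
  -- for `v x < 1` the values of `θ x` and `x` agree
  have hsmall : ∀ x, v x < 1 → v (θ x) = v x := by
    intro x hx
    rcases eq_or_ne x 0 with rfl | hx0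
    · simp
    have hvs : v s ≠ 0 := (v.ne_zero_iff).2 hs0
    have hvx : v x ≠ 0 := (v.ne_zero_iff).2 hx0
    obtain ⟨e, he⟩ : ∃ e : ℕ, log (v s) = -(e : ℤ) := by
      have : log (v s) < 0 := by rw [← exp_lt_exp, exp_log hvs, exp_zero]; exact hs1
      exact ⟨(-log (v s)).toNat, by omega⟩
    obtain ⟨m, hm⟩ : ∃ e : ℕ, log (v x) = -(e : ℤ) := by
      have : log (v x) < 0 := by rw [← exp_lt_exp, exp_log hvx, exp_zero]; exact hx
      exact ⟨(-log (v x)).toNat, by omega⟩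
    have he0 : e ≠ 0 := by
      rintro rfl
      rw [← exp_log hvs, he] at hs1
      simp at hs1
    have hm0 : m ≠ 0 := by
      rintro rfl
      rw [← exp_log hvx, hm] at hx
      simp at hx
    -- `u` is the unit with `x ^ e = s ^ m * u`
    set u := x ^ e / s ^ m with hu
    have hvu : v u = 1 := by
      rw [hu, map_div₀, map_pow, map_pow, ← exp_log hvs, ← exp_log hvx, he, hm, ← exp_nsmul,
        ← exp_nsmul, ← exp_sub, ← exp_zero]
      congr 1
      simp; ring
    have hsu : x ^ e = s ^ m * u := by rw [hu]; field_simp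
    have hid : (e : L) * u * θ x = x * (m * u + θ u) := by
      have h1 := congrArg θ hsu
      rw [Derivation.leibniz_pow, Derivation.leibniz, Derivation.leibniz_pow, hθs] at h1
      simp only [smul_eq_mul, nsmul_eq_mul] at h1
      have h2 : x * ((e : L) * (x ^ (e - 1) * θ x)) = e * x ^ e * θ x := by
        obtain ⟨n, rfl⟩ := Nat.exists_eq_succ_of_ne_zero he0
        simp; ring
      have h3 : (m : L) * (s ^ (m - 1) * s) = m * s ^ m := by
        obtain ⟨n, rfl⟩ := Nat.exists_eq_succ_of_ne_zero hm0
        rw [Nat.succ_sub_one, ← pow_succ]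
      rw [h1, hsu, h3] at h2
      apply mul_left_cancel₀ (pow_ne_zero m hs0)
      linear_combination -h2
    have h3 := congrArg v hid
    have h4 : v (m * u + θ u) = 1 := by
      have : v (m * u) = 1 := by rw [map_mul, hnat m hm0, hvu, one_mul]
      rw [v.map_add_eq_of_lt_left, this]
      rw [this]; exact hθ u hvu.le
    simpa only [map_mul, hnat e he0, hvu, one_mul, h4, mul_one] using h3
  have hbig : ∀ x, 1 < v x → v (θ x) = v x := by
    intro x hx
    have hx0 : x ≠ 0 := by rintro rfl; simp at hx
    have h1 := hsmall x⁻¹ (by rw [map_inv₀]; exact inv_lt_one_of_one_lt₀ hx)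
    rw [Derivation.leibniz_inv, smul_eq_mul, map_mul, v.map_neg] at h1
    simp only [map_pow, map_inv₀] at h1
    have hvx : v x ≠ 0 := (v.ne_zero_iff).2 hx0
    field_simp at h1
    exact h1
  constructor
  · intro x
    rcases lt_trichotomy (v x) 1 with h | h | h
    · exact (hsmall x h).le
    · rw [h]; exact (hθ x h.le).le
    · exact (hbig x h).le
  · intro x
    rcases le_or_gt (v x) 1 with h | h
    · exact (hθ x h).ne
    · rw [hbig x h]; exact h.ne'

/-! ### Places of a function field of one variable -/

open Polynomial WithZero IsDedekindDomain in
/-- The conclusion of `val_log` at a place of `L`, given as a maximal ideal `P` of a finitely generated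
Dedekind `K`-algebra `B` with fraction field `L`. Here `s` need not be a uniformizer at `P`. -/
theorem place_log {K L B : Type*} [Field K] [CharZero K] [Field L] [Algebra K L]
    [CommRing B] [IsDedekindDomain B] [Algebra K B] [Algebra.FiniteType K B] [Algebra B L]
    [IsScalarTower K B L] [IsFractionRing B L] (P : HeightOneSpectrum B)
    (θ : Derivation K L L) (s : L) (hs0 : s ≠ 0) (hs1 : P.valuation L s < 1) (hθs : θ s = s) :
    (∀ x, P.valuation L (θ x) ≤ P.valuation L x) ∧ ∀ x, P.valuation L (θ x) ≠ 1 := by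
  set v := P.valuation L with hv
  have hB : ∀ b : B, v (algebraMap B L b) ≤ 1 := fun b => P.valuation_le_one b
  have hunit : ∀ b : B, b ∉ P.asIdeal → v (algebraMap B L b) = 1 := fun b hb =>
    (P.valuation_eq_one_iff_notMem).2 hb
  have hnat : ∀ n : ℕ, n ≠ 0 → v (n : L) = 1 := by
    intro n hn
    rw [show (n : L) = algebraMap B L (n : B) by simp]
    apply hunit
    intro hmem
    have hu : IsUnit ((n : B)) := by
      rw [show (n : B) = algebraMap K B n by simp]
      exact (IsUnit.mk0 (n : K) (Nat.cast_ne_zero.2 hn)).map _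
    exact P.isPrime.ne_top (Ideal.eq_top_of_isUnit_mem _ hmem hu)
  refine val_log v hnat θ s hs0 hs1 hθs (val_log_aux v hnat θ s hs0 hs1 hθs
    (P.valuation_exists_uniformizer L) ?_ ?_)
  · -- the residue field is algebraic over `K` by Zariski's lemma
    intro x hx
    have hmax : P.asIdeal.IsMaximal := P.isMaximal
    let : Field (B ⧸ P.asIdeal) := Ideal.Quotient.field _
    obtain ⟨n, ⟨d, hd⟩, hnd⟩ := P.exists_primeCompl_mul_eq_of_integer x hx
    simp only at hnd
    replace hd : d ∉ P.asIdeal := hd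
    obtain ⟨c, hc⟩ : ∃ c : B, 1 - c * d ∈ P.asIdeal := by
      obtain ⟨c, i, hi, h⟩ := hmax.exists_inv hd
      exact ⟨c, by rw [← h]; simpa using hi⟩
    have : Module.Finite K (B ⧸ P.asIdeal) :=
      have : Algebra.FiniteType K (B ⧸ P.asIdeal) :=
        Algebra.FiniteType.of_surjective (Ideal.Quotient.mkₐ K P.asIdeal)
          (Ideal.Quotient.mkₐ_surjective _ _)
      finite_of_finite_type_of_isJacobsonRing K _
    set β : B ⧸ P.asIdeal := Ideal.Quotient.mkₐ K P.asIdeal (n * c) with hβ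
    have hint : IsIntegral K β := Algebra.IsIntegral.isIntegral β
    refine ⟨algebraMap B L (n * c), minpoly K β, hB _, ?_, ?_, ?_⟩
    · have h1 : (x - algebraMap B L (n * c)) * algebraMap B L d
          = algebraMap B L (n * (1 - c * d)) := by
        rw [sub_mul, hnd, ← map_mul, ← map_sub]; congr 1; ring
      have h2 : v (algebraMap B L (n * (1 - c * d))) < 1 :=
        (P.valuation_lt_one_iff_mem _).2 (Ideal.mul_mem_left _ _ hc)
      rwa [← h1, map_mul, hunit d hd, mul_one] at h2
    · rw [Polynomial.aeval_algebraMap_apply]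
      refine (P.valuation_lt_one_iff_mem _).2 ?_
      rw [← Ideal.Quotient.eq_zero_iff_mem]
      change Ideal.Quotient.mkₐ K P.asIdeal _ = 0
      rw [← aeval_algHom_apply]
      exact minpoly.aeval K β
    · rw [Polynomial.aeval_algebraMap_apply]
      apply hunit
      rw [← Ideal.Quotient.eq_zero_iff_mem]
      change ¬ Ideal.Quotient.mkₐ K P.asIdeal _ = 0
      rw [← aeval_algHom_apply]
      exact (minpoly.irreducible hint).separable.aeval_derivative_ne_zero (minpoly.aeval K β)
  · -- `θ` is bounded on generators of `B`, hence on `B` and on its localization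
    obtain ⟨S, hS⟩ := (inferInstance : Algebra.FiniteType K B).out
    obtain ⟨C, hC⟩ : ∃ C : ℤᵐ⁰, ∀ b ∈ S, v (θ (algebraMap B L b)) ≤ C := by
      obtain ⟨C, hC⟩ := (S.image fun b => v (θ (algebraMap B L b))).bddAbove
      exact ⟨C, fun b hb => hC (by simpa using ⟨b, hb, rfl⟩)⟩
    have hCB : ∀ b : B, v (θ (algebraMap B L b)) ≤ C := by
      intro b
      have hb : b ∈ Algebra.adjoin K (S : Set B) := by rw [hS]; trivial
      induction hb using Algebra.adjoin_induction with
      | mem x hx => exact hC x hx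
      | algebraMap r =>
        rw [← IsScalarTower.algebraMap_apply, Derivation.map_algebraMap]; simp
      | add x y _ _ hx hy =>
        rw [map_add, map_add]; exact (v.map_add _ _).trans (max_le hx hy)
      | mul x y _ _ hx hy =>
        rw [map_mul, Derivation.leibniz]
        refine (v.map_add _ _).trans (max_le ?_ ?_) <;> rw [smul_eq_mul, map_mul]
        · exact (mul_le_of_le_one_left' (hB x)).trans hy
        · exact (mul_le_of_le_one_left' (hB y)).trans hx
    refine ⟨C, fun x hx => ?_⟩
    obtain ⟨n, ⟨d, hd⟩, hnd⟩ := P.exists_primeCompl_mul_eq_of_integer x hx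
    simp only at hnd
    have h1 := congrArg θ hnd
    rw [Derivation.leibniz, smul_eq_mul, smul_eq_mul] at h1
    have h2 : algebraMap B L d * θ x = θ (algebraMap B L n) - x * θ (algebraMap B L d) := by
      linear_combination h1
    have h3 : v (θ x) = v (algebraMap B L d * θ x) := by rw [map_mul, hunit d hd, one_mul]
    rw [h3, h2]
    refine (v.map_sub _ _).trans (max_le (hCB n) ?_)
    rw [map_mul]
    exact (mul_le_of_le_one_left' hx).trans (hCB d)

open Polynomial IntermediateField in
/-- The affine curve of places of `L` at which `t` is finite: `B` is the integral closure of `K[t]`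
in `L`. Every element of `L` has a denominator which is a polynomial in `t`. -/
theorem exists_place_ring {K L : Type*} [Field K] [CharZero K] [Field L] [Algebra K L] (t : L)
    [FiniteDimensional K⟮t⟯ L] : ∃ B : Subalgebra K L, t ∈ B ∧ IsDedekindDomain B ∧
      Algebra.FiniteType K B ∧ IsFractionRing B L ∧
      (∀ b ∈ B, IsIntegral (Algebra.adjoin K {t}) b) ∧
      ∀ b : L, ∃ q : K[X], aeval t q ≠ 0 ∧ aeval t q * b ∈ B := by
  let E := Algebra.adjoin K {t}
  let : Algebra E K⟮t⟯ := IntermediateField.algebraAdjoinAdjoin.instAlgebraSubtypeMemSubalgebraAdjoinAdjoin K {t}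
  have : IsFractionRing E K⟮t⟯ := algebraAdjoinAdjoin.instIsFractionRingSubtypeMemSubalgebraAdjoinAdjoin K {t}
  have : IsScalarTower E K⟮t⟯ L := algebraAdjoinAdjoin.instIsScalarTowerSubtypeMemSubalgebraAdjoinAdjoin_1 K {t} L
  have : IsPrincipalIdealRing E := by
    have hsurj : Function.Surjective (aeval (R := K) (⟨t, Algebra.self_mem_adjoin_singleton K t⟩ : E)) := by
      rintro ⟨x, hx⟩
      have hx' := hx
      change x ∈ Algebra.adjoin K {t} at hx'
      rw [Algebra.adjoin_singleton_eq_range_aeval] at hx'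
      obtain ⟨p, rfl⟩ := hx'
      refine ⟨p, Subtype.ext ?_⟩
      exact (aeval_algHom_apply E.val _ p).symm
    exact IsPrincipalIdealRing.of_surjective (aeval (R := K) (⟨t, Algebra.self_mem_adjoin_singleton K t⟩ : E)).toRingHom hsurj
  let B := (integralClosure E L).restrictScalars K
  have hfin : Module.Finite E (integralClosure E L) := IsIntegralClosure.finite E K⟮t⟯ L _
  have : Algebra.FiniteType K E := .adjoin_of_finite (Set.finite_singleton t)
  refine ⟨B, ?_, ?_, ?_, ?_, ?_, ?_⟩
  · exact (integralClosure E L).algebraMap_mem ⟨t, Algebra.self_mem_adjoin_singleton K t⟩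
  · exact integralClosure.isDedekindDomain E K⟮t⟯ L
  · exact Algebra.FiniteType.trans (R := K) (S := E) (A := integralClosure E L) inferInstance
      inferInstance
  · exact integralClosure.isFractionRing_of_finite_extension K⟮t⟯ L
  · exact fun b hb => hb
  · intro b
    have : Algebra.IsAlgebraic E L := by
      have : Algebra.IsAlgebraic E K⟮t⟯ := IsLocalization.isAlgebraic _ (nonZeroDivisors E)
      exact Algebra.IsAlgebraic.trans E K⟮t⟯ L
    obtain ⟨⟨y, hyE⟩, hy0, hy⟩ := (Algebra.IsAlgebraic.isAlgebraic (R := E) b).exists_integral_multiple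
    have hyE' := hyE
    change y ∈ Algebra.adjoin K {t} at hyE'
    rw [Algebra.adjoin_singleton_eq_range_aeval] at hyE'
    obtain ⟨q, hq⟩ := hyE'
    have hq : aeval t q = y := hq
    refine ⟨q, ?_, ?_⟩
    · rw [hq]; rintro rfl; exact hy0 rfl
    · rw [hq]; exact hy

open Polynomial in
/-- At a place where `t` vanishes, a polynomial in `t` with nonzero constant term is a unit. -/
theorem valuation_aeval_eq_one {K L Γ : Type*} [Field K] [Field L] [Algebra K L]
    [LinearOrderedCommGroupWithZero Γ] (v : Valuation L Γ)
    (hK : ∀ c : K, c ≠ 0 → v (algebraMap K L c) = 1) (t : L) (ht : v t < 1) (q : K[X])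
    (hq : q.coeff 0 ≠ 0) : v (aeval t q) = 1 := by
  have hle : ∀ r : K[X], v (aeval t r) ≤ 1 := by
    intro r
    induction r using Polynomial.induction_on' with
    | add p q hp hq => rw [map_add]; exact (v.map_add _ _).trans (max_le hp hq)
    | monomial n a =>
      rw [Polynomial.aeval_monomial, map_mul, map_pow]
      refine mul_le_one' ?_ (pow_le_one' ht.le n)
      rcases eq_or_ne a 0 with rfl | ha
      · simp
      · exact (hK a ha).le
  rw [← divX_mul_X_add q, map_add, map_mul, Polynomial.aeval_X, Polynomial.aeval_C, v.map_add_eq_of_lt_right, hK _ hq]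
  rw [hK _ hq, map_mul]
  exact (mul_le_of_le_one_left' (hle _)).trans_lt ht

/-! ### Integrality and nilpotency for derivations with `D f = 1` -/

theorem valuation_le_one_of_isIntegral_adjoin {K L Γ : Type*} [Field K] [Field L] [Algebra K L]
    [LinearOrderedCommGroupWithZero Γ] (v : Valuation L Γ)
    (hK : ∀ c : K, v (algebraMap K L c) ≤ 1) (t x : L) (ht : v t ≤ 1)
    (hx : IsIntegral (Algebra.adjoin K {t}) x) : v x ≤ 1 := by
  have hle : ∀ y ∈ Algebra.adjoin K {t}, v y ≤ 1 := by
    intro y hy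
    induction hy using Algebra.adjoin_induction with
    | mem x hx => rw [Set.mem_singleton_iff] at hx; rwa [hx]
    | algebraMap r => exact hK r
    | add x y _ _ hx hy => exact (v.map_add _ _).trans (max_le hx hy)
    | mul x y _ _ hx hy => rw [map_mul]; exact mul_le_one' hx hy
  have hint : v.Integers v.integer := Valuation.integer.integers v
  refine hint.mem_of_integral ?_
  let φ : Algebra.adjoin K {t} →+* v.integer :=
    { toFun := fun y => ⟨y, hle y y.2⟩
      map_one' := rfl
      map_mul' := fun _ _ => rfl
      map_zero' := rfl
      map_add' := fun _ _ => rfl }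
  exact hx.map_of_comp_eq φ (RingHom.id L) rfl

open Polynomial in
/-- An element integral over both `K[f]` and the localization of `K[1/f]` at `1/f = 0`
is a function without poles, hence algebraic over the constants. -/
theorem isIntegral_of_no_poles {K L : Type*} [Field K] [Field L] [Algebra K L]
    (f b : L) (q : K[X]) (hq : q.coeff 0 ≠ 0)
    (h1 : IsIntegral (Algebra.adjoin K {f}) b)
    (h2 : IsIntegral (Algebra.adjoin K {f⁻¹}) (aeval f⁻¹ q * b)) : IsIntegral K b := by
  by_contra hb
  obtain ⟨V, hV, hbV⟩ := Subring.exists_le_valuationSubring_of_isIntegrallyClosedIn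
    (R := (integralClosure K L).toSubring) (x := b) hb
  set w := V.valuation with hw
  have hK : ∀ c : K, w (algebraMap K L c) ≤ 1 := fun c =>
    (V.valuation_le_one_iff _).2 (hV ((integralClosure K L).algebraMap_mem c))
  have hK1 : ∀ c : K, c ≠ 0 → w (algebraMap K L c) = 1 := by
    intro c hc
    refine le_antisymm (hK c) ?_
    have h := hK c⁻¹
    rw [map_inv₀, map_inv₀] at h
    exact (inv_le_one₀ (zero_lt_iff.2 ((w.ne_zero_iff).2 (by simpa using hc)))).1 h
  have hwb : ¬ w b ≤ 1 := fun h => hbV ((V.valuation_le_one_iff _).1 h)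
  rcases le_or_gt (w f) 1 with hwf | hwf
  · exact hwb (valuation_le_one_of_isIntegral_adjoin w hK f b hwf h1)
  · have hs : w f⁻¹ < 1 := by rw [map_inv₀]; exact inv_lt_one_of_one_lt₀ hwf
    have h3 := valuation_le_one_of_isIntegral_adjoin w hK f⁻¹ _ hs.le h2
    rw [map_mul, valuation_aeval_eq_one w hK1 f⁻¹ hs q hq, one_mul] at h3
    exact hwb h3

/-- Derivations kill the elements algebraic over the constants, in characteristic zero. -/
theorem derivation_eq_zero_of_isIntegral {K L : Type*} [Field K] [CharZero K] [Field L]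
    [Algebra K L] (D : Derivation K L L) (b : L) (hb : IsIntegral K b) : D b = 0 := by
  have h := D.map_aeval (minpoly K b) b
  rw [minpoly.aeval, map_zero, smul_eq_mul] at h
  exact (mul_eq_zero.1 h.symm).resolve_left
    ((minpoly.irreducible hb).separable.aeval_derivative_ne_zero (minpoly.aeval K b))

open Polynomial IntermediateField IsDedekindDomain WithZero in
/-- If `D f = 1` and every element of the `K`-algebra `R` containing `f` is a value of `D`, then the
elements of `R` are integral over `K[f]`.

Suppose `a` in `R` has a pole at a place over `f = c`, where `c` has minimal polynomial `p`, and put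
`s = p(f)`, `w = p'(f)`. Then `θ = (s / w) D` satisfies `θ s = s`, so it has no values of `v`-value
one by `place_log`. But `s * a ^ e * s ^ m` has value one for suitable `e` and `m`, and it equals
`θ l` for any `l` with `D l = a ^ e * s ^ m * w`. -/
theorem integral_of_surjective {K L : Type*} [Field K] [CharZero K] [Field L] [Algebra K L]
    (D : Derivation K L L) (f : L) (hf : D f = 1) [FiniteDimensional K⟮f⟯ L]
    (R : Subalgebra K L) (hfR : f ∈ R) (hsurj : ∀ r ∈ R, ∃ l, D l = r) :
    ∀ a ∈ R, IsIntegral (Algebra.adjoin K {f}) a := by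
  intro a ha
  obtain ⟨B, hfB, hDed, hFT, hFrac, hBint, -⟩ := exists_place_ring (K := K) (L := L) f
  suffices ∀ P : HeightOneSpectrum B, P.valuation L a ≤ 1 by
    obtain ⟨b, hb⟩ := HeightOneSpectrum.mem_integers_of_valuation_le_one L a this
    rw [← hb]
    exact hBint _ b.2
  intro P
  by_contra! hPa
  set v := P.valuation L with hv
  -- `s = p(f)` is a local parameter of `K[f]` at the centre of `P`
  have hmax : P.asIdeal.IsMaximal := P.isMaximal
  let _ : Field (B ⧸ P.asIdeal) := Ideal.Quotient.field _
  have : Algebra.FiniteType K (B ⧸ P.asIdeal) :=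
    Algebra.FiniteType.of_surjective (Ideal.Quotient.mkₐ K P.asIdeal)
      (Ideal.Quotient.mkₐ_surjective _ _)
  have : Module.Finite K (B ⧸ P.asIdeal) := finite_of_finite_type_of_isJacobsonRing K _
  set φ : B := ⟨f, hfB⟩ with hφ
  set β : B ⧸ P.asIdeal := Ideal.Quotient.mkₐ K P.asIdeal φ with hβ
  have hint : IsIntegral K β := Algebra.IsIntegral.isIntegral β
  set p := minpoly K β with hp
  have hfφ : f = algebraMap B L φ := rfl
  set s := aeval f p with hs
  set w := aeval f (derivative p) with hw
  have hvs : v s < 1 := by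
    rw [hs, hfφ, Polynomial.aeval_algebraMap_apply]
    refine (P.valuation_lt_one_iff_mem _).2 ?_
    rw [← Ideal.Quotient.eq_zero_iff_mem]
    change Ideal.Quotient.mkₐ K P.asIdeal _ = 0
    rw [← aeval_algHom_apply]
    exact minpoly.aeval K β
  have hvw : v w = 1 := by
    rw [hw, hfφ, Polynomial.aeval_algebraMap_apply]
    refine (P.valuation_eq_one_iff_notMem).2 ?_
    rw [← Ideal.Quotient.eq_zero_iff_mem]
    change ¬ Ideal.Quotient.mkₐ K P.asIdeal _ = 0
    rw [← aeval_algHom_apply]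
    exact (minpoly.irreducible hint).separable.aeval_derivative_ne_zero (minpoly.aeval K β)
  have hs0 : s ≠ 0 := by
    intro h0
    have h1 := derivation_eq_zero_of_isIntegral D f ⟨p, minpoly.monic hint, h0⟩
    rw [hf] at h1
    exact one_ne_zero h1
  have hw0 : w ≠ 0 := by rw [← v.ne_zero_iff, hvw]; exact one_ne_zero
  have hDs : D s = w := by rw [hs, D.map_aeval, hf, smul_eq_mul, mul_one]
  have hθs : ((s / w) • D) s = s := by
    rw [Derivation.smul_apply, hDs, smul_eq_mul]; field_simp
  have hlog := (place_log P ((s / w) • D) s hs0 hvs hθs).2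
  -- with `e` the order of `s` and `m + 1` the pole order of `a`, `a ^ e * s ^ (m + 1)` has value one
  have ha0 : a ≠ 0 := by rintro rfl; simp at hPa
  have hvs0 : v s ≠ 0 := (v.ne_zero_iff).2 hs0
  have hva0 : v a ≠ 0 := (v.ne_zero_iff).2 ha0
  obtain ⟨e, he⟩ : ∃ e : ℕ, log (v s) = -(e : ℤ) := by
    have : log (v s) < 0 := by rw [← exp_lt_exp, exp_log hvs0, exp_zero]; exact hvs
    exact ⟨(-log (v s)).toNat, by omega⟩
  obtain ⟨m, hm⟩ : ∃ m : ℕ, log (v a) = (m : ℤ) + 1 := by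
    have : 0 < log (v a) := by rw [← exp_lt_exp, exp_log hva0, exp_zero]; exact hPa
    exact ⟨(log (v a) - 1).toNat, by omega⟩
  have hval : v (a ^ e * s ^ (m + 1)) = 1 := by
    rw [map_mul, map_pow, map_pow, ← exp_log hvs0, ← exp_log hva0, he, hm, ← exp_nsmul,
      ← exp_nsmul, ← exp_add, ← exp_zero]
    congr 1
    simp; ring
  have hpoly : ∀ r : K[X], aeval f r ∈ R := fun r =>
    Algebra.adjoin_le (Set.singleton_subset_iff.2 hfR) (Polynomial.aeval_mem_adjoin_singleton K f)
  obtain ⟨l, hl⟩ := hsurj (a ^ e * s ^ m * w)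
    (mul_mem (mul_mem (pow_mem ha _) (pow_mem (hpoly _) _)) (hpoly _))
  apply hlog l
  rw [Derivation.smul_apply, hl, smul_eq_mul, ← hval]
  congr 1
  field_simp
  ring

open Polynomial IntermediateField IsDedekindDomain WithZero in
/-- If `D f = 1` and all iterates `D^[n] a` are integral over `K[f]`, then `D` is nilpotent at `a`.

At a place over `f = ∞` the derivation `-f D` is logarithmic for `s = 1 / f`, so `D` lowers pole
orders there. Hence some iterate `D^[j] a` has no poles at all; it is algebraic over `K` and is
killed by `D`. -/
theorem nilpotent_of_integral {K L : Type*} [Field K] [CharZero K] [Field L] [Algebra K L]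
    (D : Derivation K L L) (f : L) (hf : D f = 1) [FiniteDimensional K⟮f⟯ L] (a : L)
    (ha : ∀ n, IsIntegral (Algebra.adjoin K {f}) (D^[n] a)) : ∃ n, D^[n] a = 0 := by
  have hf0 : f ≠ 0 := by rintro rfl; simp at hf
  have hadj : K⟮f⁻¹⟯ = K⟮f⟯ := by
    apply le_antisymm <;> rw [adjoin_simple_le_iff]
    · exact inv_mem (mem_adjoin_simple_self K f)
    · have := inv_mem (mem_adjoin_simple_self K f⁻¹)
      rwa [inv_inv] at this
  have : FiniteDimensional K⟮f⁻¹⟯ L := by rw [hadj]; infer_instance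
  obtain ⟨B, hsB, hDed, hFT, hFrac, hBint, hBmul⟩ := exists_place_ring (K := K) (L := L) f⁻¹
  set s := f⁻¹ with hs
  have hs0 : s ≠ 0 := inv_ne_zero hf0
  have hDs : ((-f) • D) s = s := by
    rw [Derivation.smul_apply, hs, Derivation.leibniz_inv, hf, smul_eq_mul, smul_eq_mul]
    field_simp
  have hvB : ∀ (P : HeightOneSpectrum B) (b : L), b ∈ B → P.valuation L b ≤ 1 :=
    fun P b hb => P.valuation_le_one (⟨b, hb⟩ : B)
  have hvK : ∀ (P : HeightOneSpectrum B) (c : K), c ≠ 0 →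
      P.valuation L (algebraMap K L c) = 1 := by
    intro P c hc
    refine le_antisymm (hvB P _ (B.algebraMap_mem c)) ?_
    have h := hvB P _ (B.algebraMap_mem c⁻¹)
    rw [map_inv₀, map_inv₀] at h
    exact (inv_le_one₀ (zero_lt_iff.2 (((P.valuation L).ne_zero_iff).2 (by simpa using hc)))).1 h
  -- at every place over `s = 0` the derivation `D` lowers the pole order
  have hD : ∀ P : HeightOneSpectrum B, P.valuation L s < 1 →
      ∀ x, P.valuation L (D x) ≤ P.valuation L s * P.valuation L x := by
    intro P hP x
    have h := (place_log P ((-f) • D) s hs0 hP hDs).1 x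
    have hx : D x = -(s * (((-f) • D) x)) := by
      rw [Derivation.smul_apply, smul_eq_mul, hs]; field_simp
    rw [hx, Valuation.map_neg, map_mul]
    exact mul_le_mul_right h _
  -- clearing the denominators of `b` away from `s = 0`
  have hclear : ∀ b : L, ∃ (j : ℕ) (q : K[X]), q.coeff 0 ≠ 0 ∧ s ^ j * (aeval s q * b) ∈ B := by
    intro b
    obtain ⟨q, hq0, hqb⟩ := hBmul b
    have hq0' : q ≠ 0 := by rintro rfl; simp at hq0
    obtain ⟨q₁, hq₁, hX⟩ := Polynomial.exists_eq_pow_rootMultiplicity_mul_and_not_dvd q hq0' 0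
    refine ⟨q.rootMultiplicity 0, q₁, ?_, ?_⟩
    · rwa [Polynomial.C_0, sub_zero, Polynomial.X_dvd_iff] at hX
    · rw [hq₁] at hqb
      simpa [mul_assoc] using hqb
  obtain ⟨j, q, hq, hqa⟩ := hclear a
  have hPa : ∀ P : HeightOneSpectrum B, P.valuation L s < 1 → P.valuation L (D^[j] a) ≤ 1 := by
    intro P hP
    have h1 := hvB P _ hqa
    rw [map_mul, map_pow, map_mul, valuation_aeval_eq_one _ (hvK P) s hP q hq, one_mul] at h1
    refine le_trans ?_ h1
    clear h1 hqa
    induction j with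
    | zero => simp
    | succ n ih =>
      rw [Function.iterate_succ_apply']
      refine (hD P hP _).trans ?_
      rw [pow_succ', mul_assoc]
      exact mul_le_mul_right ih _
  refine ⟨j + 1, ?_⟩
  rw [Function.iterate_succ_apply']
  refine derivation_eq_zero_of_isIntegral D _ ?_
  obtain ⟨i, q', hq', hqb⟩ := hclear (D^[j] a)
  refine isIntegral_of_no_poles f _ q' hq' (ha j) (hBint _ ?_)
  suffices ∀ P : HeightOneSpectrum B, P.valuation L (aeval s q' * D^[j] a) ≤ 1 by
    obtain ⟨b, hb⟩ := HeightOneSpectrum.mem_integers_of_valuation_le_one L _ this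
    rw [← hs, ← hb]
    exact b.2
  intro P
  rcases (hvB P s hsB).lt_or_eq with hP | hP
  · rw [map_mul, valuation_aeval_eq_one _ (hvK P) s hP q' hq', one_mul]
    exact hPa P hP
  · have h1 := hvB P _ hqb
    rwa [map_mul, map_pow, hP, one_pow, one_mul] at h1

/-! ### The field of constants and the theorem of Stein -/

open TensorProduct in
/-- A derivation of a domain extends to its fraction field. -/
theorem exists_derivation_extend {k A L : Type*} [Field k] [CommRing A] [IsDomain A] [Algebra k A]
    [Field L] [Algebra A L] [Algebra k L] [IsScalarTower k A L] [IsFractionRing A L]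
    (D : Derivation k A A) :
    ∃ D' : Derivation k L L, ∀ a, D' (algebraMap A L a) = algebraMap A L (D a) := by
  have : Algebra.FormallyEtale A L := Algebra.FormallyEtale.of_isLocalization (nonZeroDivisors A)
  let φ : L ⊗[A] (Ω[A⁄k]) →ₗ[L] L :=
    LinearMap.liftBaseChange L ((Algebra.linearMap A L) ∘ₗ D.liftKaehlerDifferential)
  let ψ := φ ∘ₗ (KaehlerDifferential.tensorKaehlerEquivOfFormallyEtale k A L).symm.toLinearMap
  refine ⟨ψ.compDer (KaehlerDifferential.D k L), fun a => ?_⟩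
  change φ ((KaehlerDifferential.tensorKaehlerEquivOfFormallyEtale k A L).symm
    (KaehlerDifferential.D k L (algebraMap A L a))) = _
  rw [KaehlerDifferential.tensorKaehlerEquivOfFormallyEtale_symm_D_algebraMap]
  simp [φ]

/-- The field of constants of a derivation of a field. -/
def constField {k L : Type*} [Field k] [Field L] [Algebra k L] (D : Derivation k L L) :
    IntermediateField k L where
  carrier := {x | D x = 0}
  mul_mem' := by
    intro a b (ha : D a = 0) (hb : D b = 0)
    simp [ha, hb]
  add_mem' := by
    intro a b (ha : D a = 0) (hb : D b = 0)
    simp [ha, hb]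
  algebraMap_mem' r := by simp
  inv_mem' := by
    intro a (ha : D a = 0)
    simp [Derivation.leibniz_inv, ha]

/-- A derivation of a field is linear over its field of constants. -/
def constDer {k L : Type*} [Field k] [Field L] [Algebra k L] (D : Derivation k L L) :
    Derivation (constField D) L L :=
  Derivation.mk' { toFun := D
                   map_add' := map_add D
                   map_smul' := by
                    intro c x
                    have hc : D (c : L) = 0 := c.2
                    simp [Algebra.smul_def, hc] } (D.leibniz)

@[simp]
theorem constDer_apply {k L : Type*} [Field k] [Field L] [Algebra k L] (D : Derivation k L L)
    (x : L) : constDer D x = D x := rfl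

open IntermediateField in
/-- If `L / k` is a finitely generated extension of transcendence degree at most two with a
nonconstant `f` and a transcendental constant `g`, then `L` is finite over `K(f)`, `K` being the
field of constants. -/
theorem finite_over_constants {k L : Type*} [Field k] [CharZero k] [Field L] [Algebra k L]
    [Algebra.EssFiniteType k L] (htr : Algebra.trdeg k L ≤ 2) (D : Derivation k L L) (f g : L)
    (hf : D f = 1) (hg : D g = 0) (hg' : Transcendental k g) :
    FiniteDimensional (constField D)⟮f⟯ L := by
  have hCK : CharZero (constField D) := charZero_of_injective_algebraMap (algebraMap k _).injective
  have hft : Transcendental (constField D) f := by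
    intro h
    have := derivation_eq_zero_of_isIntegral (constDer D) f h.isIntegral
    rw [constDer_apply, hf] at this
    exact one_ne_zero this
  have hgt : AlgebraicIndependent k ![(⟨g, hg⟩ : constField D)] := by
    rw [algebraicIndependent_unique_type_iff]
    intro h
    exact hg' (h.algebraMap (A := L))
  have hK1 : 1 ≤ Algebra.trdeg k (constField D) := by
    simpa using hgt.lift_cardinalMk_le_trdeg
  have hadd := trdeg_add_eq k (constField D) (A := L)
  have hL1 : Algebra.trdeg (constField D) L ≤ 1 := by
    have h : 1 + Algebra.trdeg (constField D) L ≤ 1 + 1 := by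
      rw [one_add_one_eq_two]
      exact (add_le_add_left hK1 _).trans (hadd.trans_le htr)
    rwa [add_comm, Cardinal.add_one_le_add_one_iff] at h
  have hfi : AlgebraicIndependent (constField D) ![f] := by
    rw [algebraicIndependent_unique_type_iff]
    exact hft
  have hbasis := hfi.isTranscendenceBasis_of_lift_trdeg_le_of_finite (by simpa using hL1)
  have halg : Algebra.IsAlgebraic (constField D)⟮f⟯ L := by
    have := hbasis.isAlgebraic_field
    rwa [show Set.range ![f] = {f} by simp] at this
  have : Algebra.EssFiniteType (constField D)⟮f⟯ L := by
    have : Algebra.EssFiniteType (constField D) L := Algebra.EssFiniteType.of_comp k _ L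
    exact Algebra.EssFiniteType.of_comp (constField D) _ L
  exact Algebra.finite_of_essFiniteType_of_isAlgebraic

/-- Stein's theorem: a surjective derivation `D` of a finitely generated domain of transcendence degree
at most two is locally nilpotent, provided `D` kills some `g` that is transcendental over `k`. The
latter is ensured by a derivation `E` with `E g = 1`. -/
theorem locally_nilpotent {k A : Type*} [Field k] [CharZero k] [CommRing A] [IsDomain A]
    [Algebra k A] [Algebra.FiniteType k A] (htr : Algebra.trdeg k A ≤ 2)
    (D E : Derivation k A A) (hsurj : Function.Surjective D) (f g : A)
    (hf : D f = 1) (hg : D g = 0) (hE : E g = 1) (a : A) : ∃ n, D^[n] a = 0 := by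
  let L := FractionRing A
  have : CharZero L := charZero_of_injective_algebraMap (algebraMap k L).injective
  obtain ⟨D', hD'⟩ := exists_derivation_extend (L := L) D
  obtain ⟨E', hE'⟩ := exists_derivation_extend (L := L) E
  have hg' : Transcendental k (algebraMap A L g) := by
    intro h
    have := derivation_eq_zero_of_isIntegral E' _ h.isIntegral
    rw [hE', hE, map_one] at this
    exact one_ne_zero this
  have : Algebra.EssFiniteType A L := Algebra.EssFiniteType.of_isLocalization L (nonZeroDivisors A)
  have : Algebra.EssFiniteType k L := Algebra.EssFiniteType.comp k A L
  have htr' : Algebra.trdeg k L ≤ 2 := by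
    rw [← trdeg_add_eq k A (A := L)]
    have := IsLocalization.isAlgebraic L (nonZeroDivisors A)
    rwa [trdeg_eq_zero (R := A) (A := L), add_zero]
  have hf1 : D' (algebraMap A L f) = 1 := by rw [hD', hf, map_one]
  have hg1 : D' (algebraMap A L g) = 0 := by rw [hD', hg, map_zero]
  have := finite_over_constants htr' D' _ _ hf1 hg1 hg'
  have hCK : CharZero (constField D') :=
    charZero_of_injective_algebraMap (algebraMap k _).injective
  -- `R` is the algebra generated by `A` over the constants; it is spanned by `A`
  let R : Subalgebra (constField D') L := Algebra.adjoin _ (Set.range (algebraMap A L))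
  have hAR : ∀ a, algebraMap A L a ∈ R := fun a => Algebra.subset_adjoin ⟨a, rfl⟩
  have hRspan : ∀ r ∈ R, ∃ l, constDer D' l = r := by
    intro r hr
    have hr' : r ∈ Subalgebra.toSubmodule R := hr
    rw [show R = Algebra.adjoin (constField D')
      ((MonoidHom.mrange (algebraMap A L : A →* L) : Submonoid L) : Set L) from rfl,
      Algebra.adjoin_eq_span_of_subset] at hr'
    · have : Submodule.span (constField D') (Set.range (algebraMap A L)) ≤
          LinearMap.range (constDer D').toLinearMap := by
        rw [Submodule.span_le]
        rintro _ ⟨b, rfl⟩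
        obtain ⟨c, rfl⟩ := hsurj b
        exact ⟨algebraMap A L c, hD' c⟩
      exact this hr'
    · refine subset_trans ?_ Submodule.subset_span
      exact (Submonoid.closure_eq _).le
  have hint := integral_of_surjective (constDer D') (algebraMap A L f) hf1 R (hAR f) hRspan
  have hiter : ∀ n, (constDer D')^[n] (algebraMap A L a) = algebraMap A L (D^[n] a) := by
    intro n
    induction n with
    | zero => rfl
    | succ n ih => rw [Function.iterate_succ_apply', ih, Function.iterate_succ_apply']; exact hD' _
  obtain ⟨n, hn⟩ := nilpotent_of_integral (constDer D') (algebraMap A L f) hf1 (algebraMap A L a)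
    (fun n => by rw [hiter]; exact hint _ (hAR _))
  refine ⟨n, ?_⟩
  rw [hiter] at hn
  simpa using hn

/-! ### Polynomials in two variables -/

/-- Formal integration with respect to `X i`: a linear right inverse of `pderiv i` that commutes
with the other partial derivatives. -/
theorem exists_integral (k : Type*) [Field k] [CharZero k] (i : Fin 2) :
    ∃ I : MvPolynomial (Fin 2) k →ₗ[k] MvPolynomial (Fin 2) k,
      (∀ p, pderiv i (I p) = p) ∧ ∀ j ≠ i, ∀ p, pderiv j (I p) = I (pderiv j p) := by
  let I : MvPolynomial (Fin 2) k →ₗ[k] MvPolynomial (Fin 2) k :=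
    (basisMonomials (Fin 2) k).constr k
      (fun m => monomial (m + Finsupp.single i 1) (((m i : k) + 1)⁻¹))
  have hI : ∀ m c, I (monomial m c) = monomial (m + Finsupp.single i 1) (c * ((m i : k) + 1)⁻¹) := by
    intro m c
    have h : I (monomial m 1) = monomial (m + Finsupp.single i 1) (((m i : k) + 1)⁻¹) := by
      have := (basisMonomials (Fin 2) k).constr_basis k
        (fun m => monomial (m + Finsupp.single i 1) (((m i : k) + 1)⁻¹)) m
      rwa [coe_basisMonomials] at this
    rw [← mul_one c, ← smul_eq_mul, ← smul_monomial, map_smul, h, smul_monomial]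
    simp
  refine ⟨I, fun p => ?_, fun j hj p => ?_⟩
  · induction p using MvPolynomial.induction_on' with
    | add p q hp hq => rw [map_add, map_add, hp, hq]
    | monomial m c =>
      have hm : (m i : k) + 1 ≠ 0 := Nat.cast_add_one_ne_zero _
      rw [hI, pderiv_monomial]
      simp [hm]
  · induction p using MvPolynomial.induction_on' with
    | add p q hp hq => simp only [map_add, hp, hq]
    | monomial m c =>
      rw [hI, pderiv_monomial, pderiv_monomial, hI]
      have h1 : (Finsupp.single i 1 : Fin 2 →₀ ℕ) j = 0 := Finsupp.single_eq_of_ne hj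
      have h2 : (Finsupp.single j 1 : Fin 2 →₀ ℕ) i = 0 := Finsupp.single_eq_of_ne hj.symm
      rcases Nat.eq_zero_or_pos (m j) with h0 | h0
      · simp [h0, h1]
      · have h3 : m + Finsupp.single i 1 - Finsupp.single j 1
            = m - Finsupp.single j 1 + Finsupp.single i 1 := by
          ext l
          by_cases hl : l = j
          · subst hl; simp [h1]
          · simp [Finsupp.single_eq_of_ne hl]
        rw [h3]
        simp [h1, h2]
        ring_nf

theorem pderiv_zero_pderiv_one {k : Type*} [Field k] (a : MvPolynomial (Fin 2) k) :
    pderiv 0 (pderiv 1 a) = pderiv 1 (pderiv 0 a) := by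
  have h : ⁅(pderiv 0 : Derivation k (MvPolynomial (Fin 2) k) (MvPolynomial (Fin 2) k)),
      (pderiv 1 : Derivation k (MvPolynomial (Fin 2) k) (MvPolynomial (Fin 2) k))⁆ = 0 := by
    apply derivation_ext
    intro i
    fin_cases i <;> simp [Derivation.commutator_apply, pderiv_X]
  have := congrArg (fun D => D a) h
  simpa [Derivation.commutator_apply, sub_eq_zero] using this

theorem eq_C_of_pderiv_eq_zero {k : Type*} [Field k] [CharZero k] (a : MvPolynomial (Fin 2) k)
    (h : ∀ i, pderiv i a = 0) : ∃ c, a = C c := by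
  refine ⟨coeff 0 a, ?_⟩
  ext m
  rw [coeff_C]
  split_ifs with hm
  · rw [← hm]
  · obtain ⟨i, hi⟩ : ∃ i, m i ≠ 0 := by
      by_contra! h
      exact hm (Finsupp.ext fun i => (h i).symm)
    have h1 := coeff_pderiv (i := i) a (m - Finsupp.single i 1)
    rw [h, coeff_zero, tsub_add_cancel_of_le (by simpa using Nat.one_le_iff_ne_zero.2 hi)] at h1
    have h2 : ((m - Finsupp.single i 1 : Fin 2 →₀ ℕ) i : k) + 1 ≠ 0 := Nat.cast_add_one_ne_zero _
    exact (mul_eq_zero.1 h1.symm).resolve_right h2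

theorem totalDegree_pderiv_lt {k : Type*} [Field k] (a : MvPolynomial (Fin 2) k)
    (i : Fin 2) (h : pderiv i a ≠ 0) : (pderiv i a).totalDegree < a.totalDegree := by
  have key : ∀ m ∈ (pderiv i a).support, m.degree < a.totalDegree := by
    intro m hm
    rw [mem_support_iff, coeff_pderiv] at hm
    have := le_totalDegree (mem_support_iff.2 (left_ne_zero_of_mul hm))
    change (m + Finsupp.single i 1).degree ≤ _ at this
    rw [map_add, Finsupp.degree_single] at this
    omega
  obtain ⟨m, hm⟩ := support_nonempty.2 h
  rw [totalDegree, Finset.sup_lt_iff]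
  · exact key
  · exact (Nat.zero_le _).trans_lt (key m hm)

theorem exists_polynomial_antiderivative {k : Type*} [Field k] [CharZero k] (P : Polynomial k) :
    ∃ Q : Polynomial k, Polynomial.derivative Q = P := by
  induction P using Polynomial.induction_on' with
  | add p q hp hq =>
    obtain ⟨P, rfl⟩ := hp
    obtain ⟨Q, rfl⟩ := hq
    exact ⟨P + Q, Polynomial.derivative_add⟩
  | monomial n c =>
    have hn : (n : k) + 1 ≠ 0 := Nat.cast_add_one_ne_zero _
    refine ⟨Polynomial.monomial (n + 1) (c * ((n : k) + 1)⁻¹), ?_⟩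
    rw [Polynomial.derivative_monomial]
    simp [hn]

/-- If `f, g` have Jacobian determinant one, a polynomial `a` whose Jacobian with `g` vanishes is a
polynomial in `g`: the derivative `b = ∂a/∂g` satisfies `∇a = b ∇g`, so it has the same property
and smaller degree, and `a` is recovered from `b` by integration. -/
theorem eq_aeval_of_jacobian_eq_zero {k : Type*} [Field k] [CharZero k]
    (f g : MvPolynomial (Fin 2) k)
    (hfg : pderiv 0 f * pderiv 1 g - pderiv 1 f * pderiv 0 g = 1) (a : MvPolynomial (Fin 2) k)
    (ha : pderiv 0 a * pderiv 1 g = pderiv 1 a * pderiv 0 g) :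
    ∃ Q : Polynomial k, a = Polynomial.aeval g Q := by
  induction hn : a.totalDegree using Nat.strong_induction_on generalizing a with
  | _ n ih =>
  set b := pderiv 0 f * pderiv 1 a - pderiv 1 f * pderiv 0 a with hb
  have hab : ∀ i, pderiv i a = b * pderiv i g := by
    intro i
    fin_cases i
    · change pderiv 0 a = b * pderiv 0 g
      rw [hb]
      linear_combination (-pderiv 0 a) * hfg + pderiv 0 f * ha
    · change pderiv 1 a = b * pderiv 1 g
      rw [hb]
      linear_combination (-pderiv 1 a) * hfg + pderiv 1 f * ha
  have hbker : pderiv 0 b * pderiv 1 g = pderiv 1 b * pderiv 0 g := by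
    have h := pderiv_zero_pderiv_one a
    rw [hab 0, hab 1, pderiv_mul, pderiv_mul, pderiv_zero_pderiv_one g] at h
    linear_combination h
  obtain ⟨P, hP⟩ : ∃ P : Polynomial k, b = Polynomial.aeval g P := by
    by_cases hb0 : b = 0
    · exact ⟨0, by simpa using hb0⟩
    obtain ⟨i, hi⟩ : ∃ i, pderiv i g ≠ 0 := by
      by_contra! h
      simp [h] at hfg
    have hai : pderiv i a ≠ 0 := by rw [hab]; exact mul_ne_zero hb0 hi
    refine ih b.totalDegree ?_ b hbker rfl
    have h1 := totalDegree_pderiv_lt a i hai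
    rw [hab i, totalDegree_mul_of_isDomain hb0 hi] at h1
    omega
  obtain ⟨Q, hQ⟩ := exists_polynomial_antiderivative P
  obtain ⟨c, hc⟩ := eq_C_of_pderiv_eq_zero (a - Polynomial.aeval g Q) (fun i => by
    rw [map_sub, Derivation.map_aeval, hQ, ← hP, smul_eq_mul, hab i, sub_self])
  refine ⟨Q + Polynomial.C c, ?_⟩
  rw [map_add, Polynomial.aeval_C, algebraMap_eq, ← hc]
  ring

/-- The chain rule for a derivation and a polynomial in two elements. -/
theorem derivation_aeval_pair {k A : Type*} [Field k] [CommRing A] [Algebra k A]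
    (D : Derivation k A A) (s g : A) (Q : MvPolynomial (Fin 2) k) :
    D (aeval ![s, g] Q) = aeval ![s, g] (pderiv 0 Q) * D s + aeval ![s, g] (pderiv 1 Q) * D g := by
  induction Q using MvPolynomial.induction_on with
  | C c => simp
  | add p q hp hq => simp only [map_add, hp, hq]; ring
  | mul_X p i hp =>
    rw [map_mul, Derivation.leibniz, hp]
    fin_cases i <;> simp [pderiv_X] <;> ring

theorem mkDerivation_pair {k : Type*} [Field k] (p q a : MvPolynomial (Fin 2) k) :
    mkDerivation k ![p, q] a = p * pderiv 0 a + q * pderiv 1 a := by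
  have : mkDerivation k ![p, q] = p • pderiv 0 + q • pderiv 1 := by
    apply derivation_ext
    intro i
    fin_cases i <;> simp [pderiv_X]
  rw [this]; rfl

theorem adjoin_pair_eq_range {k A : Type*} [Field k] [CommRing A] [Algebra k A] (s g : A) :
    Algebra.adjoin k {s, g} = (aeval ![s, g] : MvPolynomial (Fin 2) k →ₐ[k] A).range := by
  rw [← Algebra.adjoin_range_eq_range_aeval]
  simp [Set.pair_comm]

/-- If `(f, g)` has Jacobian determinant one and `∂/∂f`, the Hamiltonian derivation of `g`, is
surjective, then `k[f, g]` is everything: `∂/∂f` is locally nilpotent with kernel `k[g]`, so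
repeated integration with respect to `f` recovers any polynomial from its iterated derivatives. -/
theorem adjoin_eq_top_of_surjective {k : Type*} [Field k] [CharZero k]
    (f g : MvPolynomial (Fin 2) k)
    (hfg : pderiv 0 f * pderiv 1 g - pderiv 1 f * pderiv 0 g = 1)
    (hsurj : Function.Surjective (mkDerivation k ![pderiv 1 g, -pderiv 0 g])) :
    Algebra.adjoin k {f, g} = ⊤ := by
  set D : Derivation k (MvPolynomial (Fin 2) k) (MvPolynomial (Fin 2) k) :=
    mkDerivation k ![pderiv 1 g, -pderiv 0 g] with hD
  have hDa : ∀ a, D a = pderiv 1 g * pderiv 0 a + -pderiv 0 g * pderiv 1 a := mkDerivation_pair _ _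
  have hDf : D f = 1 := by rw [hDa]; linear_combination hfg
  have hDg : D g = 0 := by rw [hDa]; ring
  obtain ⟨I, hI, -⟩ := exists_integral k 0
  rw [adjoin_pair_eq_range]
  have key : ∀ n a, D^[n] a = 0 → a ∈ (aeval ![f, g] : MvPolynomial (Fin 2) k →ₐ[k] _).range := by
    intro n
    induction n with
    | zero =>
      rintro a (rfl : a = 0)
      exact zero_mem _
    | succ n ih =>
      intro a ha
      obtain ⟨Q, hQ⟩ := ih (D a) ha
      have hQ : aeval ![f, g] Q = D a := hQ
      have hker : D (a - aeval ![f, g] (I Q)) = 0 := by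
        rw [map_sub, derivation_aeval_pair, hI, hDf, hDg, hQ]; ring
      rw [hDa] at hker
      obtain ⟨P, hP⟩ := eq_aeval_of_jacobian_eq_zero f g hfg
        (a - aeval ![f, g] (I Q)) (by linear_combination hker)
      rw [← sub_add_cancel a (aeval ![f, g] (I Q)), hP]
      refine add_mem ?_ ⟨_, rfl⟩
      rw [← adjoin_pair_eq_range]
      exact Algebra.adjoin_mono (by simp) (Polynomial.aeval_mem_adjoin_singleton k g)
  rw [eq_top_iff]
  rintro a -
  obtain ⟨n, hn⟩ := locally_nilpotent (by simp) D (mkDerivation k ![-pderiv 1 f, pderiv 0 f]) hsurj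
    f g hDf hDg (by rw [mkDerivation_pair]; linear_combination hfg) a
  exact key n a hn

/-- Under the Jacobian conjecture, a divergence-free derivation with `D s = 1` is the Hamiltonian
derivation of some `g`, hence is `∂/∂s` on `k[s, g] = k[x, y]`, and so is surjective. -/
theorem surjective_of_jacobian {k : Type*} [Field k] [CharZero k]
    (hJ : ∀ f g : MvPolynomial (Fin 2) k,
    pderiv 0 f * pderiv 1 g - pderiv 1 f * pderiv 0 g = 1 →
      Algebra.adjoin k {f, g} = (⊤ : Subalgebra k (MvPolynomial (Fin 2) k)))
    (p q : MvPolynomial (Fin 2) k) (hdiv : pderiv 0 p + pderiv 1 q = 0)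
    (s : MvPolynomial (Fin 2) k) (hs : mkDerivation k ![p, q] s = 1) :
    Function.Surjective (mkDerivation k ![p, q]) := by
  obtain ⟨I, hI, hI'⟩ := exists_integral k 0
  obtain ⟨J, hJ1, hJ'⟩ := exists_integral k 1
  -- Poincaré lemma: the divergence-free field is the Hamiltonian field of `g`
  obtain ⟨g, hg1, hg0⟩ : ∃ g, pderiv 1 g = p ∧ pderiv 0 g = -q := by
    refine ⟨J p - I (q + pderiv 0 (J p)), ?_, ?_⟩
    · rw [map_sub, hJ1, hI' 1 (by decide), map_add, ← pderiv_zero_pderiv_one, hJ1, add_comm, hdiv, map_zero,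
        sub_zero]
    · rw [map_sub, hI]; ring
  have htop := hJ s g (by rw [← hs, mkDerivation_pair, hg1, hg0]; ring)
  rw [adjoin_pair_eq_range] at htop
  intro a
  obtain ⟨P, hP⟩ : a ∈ (aeval ![s, g] : MvPolynomial (Fin 2) k →ₐ[k] _).range := by
    rw [htop]; trivial
  have hP : aeval ![s, g] P = a := hP
  have hDg : mkDerivation k ![p, q] g = 0 := by rw [mkDerivation_pair, hg1, hg0]; ring
  refine ⟨aeval ![s, g] (I P), ?_⟩
  rw [derivation_aeval_pair, hI, hs, hDg, hP]; ring

/-- The two-dimensional Jacobian conjecture holds iff the image of every divergence-zero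
`k`-derivation `D = p∂_x + q∂_y` of `k[x,y]` with `1 ∈ Im D` is a Mathieu subspace. -/
theorem jc2_iff_mathieu (k : Type*) [Field k] [CharZero k] :
    JacobianConjecture2 k ↔
      ∀ p q : MvPolynomial (Fin 2) k,
        pderiv 0 p + pderiv 1 q = 0 →
        (1 : MvPolynomial (Fin 2) k) ∈
          LinearMap.range (MvPolynomial.mkDerivation k ![p, q] :
            Derivation k (MvPolynomial (Fin 2) k) (MvPolynomial (Fin 2) k)).toLinearMap →
        IsMathieu k
          (LinearMap.range (MvPolynomial.mkDerivation k ![p, q] :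
            Derivation k (MvPolynomial (Fin 2) k) (MvPolynomial (Fin 2) k)).toLinearMap) := by
  constructor
  · rintro hJ p q hdiv ⟨s, hs⟩ a - b
    exact ⟨0, fun m _ => surjective_of_jacobian hJ p q hdiv s hs _⟩
  · intro hM f g hfg
    -- the powers of `1` lie in the image of `∂/∂f`, so a Mathieu image is everything
    refine adjoin_eq_top_of_surjective f g hfg fun b => ?_
    have h1 : (1 : MvPolynomial (Fin 2) k) ∈ LinearMap.range
        (mkDerivation k ![pderiv 1 g, -pderiv 0 g] :
          Derivation k (MvPolynomial (Fin 2) k) (MvPolynomial (Fin 2) k)).toLinearMap := by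
      refine ⟨f, ?_⟩
      change mkDerivation k ![pderiv 1 g, -pderiv 0 g] f = 1
      rw [mkDerivation_pair]; linear_combination hfg
    obtain ⟨N, hN⟩ := hM _ _ (by rw [map_neg, pderiv_zero_pderiv_one, add_neg_cancel]) h1 1
      (fun m _ => by rwa [one_pow]) b
    have h2 := hN N le_rfl
    rw [one_pow, mul_one] at h2
    exact h2
end
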